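/- arXiv:1607.05035 — 3 statements merged into one kernel-verified Lean document; each statement's English description precedes it below -/
import Mathlib

section
/- For every mesh size h = 1/m and every spline degree p ≥ 1, the inverse inequality |u|_1 ≤ 2√3 · h^{-1} · ‖u‖_0 holds for all u ∈ S_0, with the constant 2√3 independent of h and p. -/
noncomputable section

open MeasureTheory Set

namespace SplineMG

/-- The `j`-th piece of the uniform partition of `[0,1]` into `m` subintervals of
length `h = 1/m`; the first and last pieces are extended to `-∞` resp. `+∞`
(the spline is extended polynomially outside `[0,1]`). -/
def pieceSet (m j : ℕ) : Set ℝ :=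
  (if j = 0 then Iic ((1 : ℝ) / m) else Icc ((j : ℝ) / m) (((j : ℝ) + 1) / m)) ∪
  (if j = m - 1 then Ici (((m : ℝ) - 1) / m) else ∅)

/-- `u : ℝ → ℝ` belongs to the univariate spline space `S` of degree `p` and maximal
smoothness `C^{p-1}` on the uniform partition of `(0,1)` into `m` intervals of
length `h = 1/m`. -/
def IsSpline (m p : ℕ) (u : ℝ → ℝ) : Prop :=
  ContDiffOn ℝ (p - 1 : ℕ) u (Ioo (0 : ℝ) 1) ∧
  ∀ j < m, ∃ q : Polynomial ℝ, q.natDegree ≤ p ∧ ∀ x ∈ pieceSet m j, u x = q.eval x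

/-- `u` belongs to the subspace `S₀` of `S`: all odd derivatives of order `< p`
vanish at both endpoints. -/
def IsSpline0 (m p : ℕ) (u : ℝ → ℝ) : Prop :=
  IsSpline m p u ∧
  ∀ l : ℕ, 2 * l + 1 < p →
    iteratedDeriv (2 * l + 1) u 0 = 0 ∧ iteratedDeriv (2 * l + 1) u 1 = 0

/-- The `L²(0,1)` inner product. -/
def ip0 (u v : ℝ → ℝ) : ℝ := ∫ x in Ioo (0 : ℝ) 1, u x * v x

/-- The squared `L²(0,1)` norm `‖u‖₀²`. -/
def l2normSq (u : ℝ → ℝ) : ℝ := ∫ x in Ioo (0 : ℝ) 1, u x ^ 2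

/-- The `L²(0,1)` norm `‖u‖₀`. -/
def l2norm (u : ℝ → ℝ) : ℝ := Real.sqrt (l2normSq u)

/-- The squared `H¹(0,1)` seminorm `|u|₁²`. -/
def h1semiSq (u : ℝ → ℝ) : ℝ := ∫ x in Ioo (0 : ℝ) 1, deriv u x ^ 2

/-- The `H¹(0,1)` seminorm `|u|₁`. -/
def h1semi (u : ℝ → ℝ) : ℝ := Real.sqrt (h1semiSq u)

/-- The squared full `H¹(0,1)` norm. -/
def h1normSq (u : ℝ → ℝ) : ℝ := l2normSq u + h1semiSq u

/-- `u` belongs to `S₁`, the `L²(0,1)`-orthogonal complement of `S₀` in `S`. -/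
def IsSpline1 (m p : ℕ) (u : ℝ → ℝ) : Prop :=
  IsSpline m p u ∧ ∀ v, IsSpline0 m p v → ip0 u v = 0

/-- `v = Q₀ u` is the `L²(0,1)`-orthogonal projection of `u` onto `S₀`. -/
def IsL2Proj0 (m p : ℕ) (u v : ℝ → ℝ) : Prop :=
  IsSpline0 m p v ∧ ∀ w, IsSpline0 m p w → ip0 (u - v) w = 0

/-- The component predicate: `false ↦ S₀`, `true ↦ S₁`. -/
def IsSplineC (m p : ℕ) : Bool → (ℝ → ℝ) → Prop
  | false => IsSpline0 m p
  | true => IsSpline1 m p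

/-- The tensor-product spline space `S^d = S ⊗ ⋯ ⊗ S` on `(0,1)^d`. -/
def TensorSpline (d m p : ℕ) : Submodule ℝ ((Fin d → ℝ) → ℝ) :=
  Submodule.span ℝ {u | ∃ f : Fin d → ℝ → ℝ, (∀ i, IsSpline m p (f i)) ∧
    u = fun x => ∏ i, f i (x i)}

/-- The subspace `S_α = S_{α₁} ⊗ ⋯ ⊗ S_{α_d}` of `S^d`, for `α ∈ {0,1}^d`
(`false ↦ 0`, `true ↦ 1`). -/
def TensorSplineSub (d m p : ℕ) (α : Fin d → Bool) : Submodule ℝ ((Fin d → ℝ) → ℝ) :=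
  Submodule.span ℝ {u | ∃ f : Fin d → ℝ → ℝ, (∀ i, IsSplineC m p (α i) (f i)) ∧
    u = fun x => ∏ i, f i (x i)}

/-- The open unit cube `Ω = (0,1)^d`. -/
def cube (d : ℕ) : Set (Fin d → ℝ) := Set.univ.pi fun _ => Ioo (0 : ℝ) 1

/-- The `i`-th partial derivative. -/
def pd (d : ℕ) (i : Fin d) (u : (Fin d → ℝ) → ℝ) : (Fin d → ℝ) → ℝ :=
  fun x => deriv (fun t => u (Function.update x i t)) (x i)

/-- The `L²(Ω)` inner product on the unit cube. -/
def ipd (d : ℕ) (u v : (Fin d → ℝ) → ℝ) : ℝ := ∫ x in cube d, u x * v x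

/-- The squared `L²(Ω)` norm. -/
def l2normSqD (d : ℕ) (u : (Fin d → ℝ) → ℝ) : ℝ := ∫ x in cube d, u x ^ 2

/-- The bilinear form `a(u,v) = ∫_Ω (∇u·∇v + uv) dx`. -/
def aForm (d : ℕ) (u v : (Fin d → ℝ) → ℝ) : ℝ :=
  ∫ x in cube d, (∑ i, pd d i u x * pd d i v x) + u x * v x

/-- The squared `H¹(Ω)` seminorm. -/
def h1semiSqD (d : ℕ) (u : (Fin d → ℝ) → ℝ) : ℝ :=
  ∫ x in cube d, ∑ i, pd d i u x ^ 2

/-- The squared full `H¹(Ω)` norm. -/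
def h1normSqD (d : ℕ) (u : (Fin d → ℝ) → ℝ) : ℝ := l2normSqD d u + h1semiSqD d u

/-- `v = Q_α u` is the `L²(Ω)`-orthogonal projection of `u` onto `S_α`. -/
def IsL2ProjSub (d m p : ℕ) (α : Fin d → Bool) (u v : (Fin d → ℝ) → ℝ) : Prop :=
  v ∈ TensorSplineSub d m p α ∧ ∀ w ∈ TensorSplineSub d m p α, ipd d (u - v) w = 0

/-- The coarse tensor-product spline space `(S_c)^d` (with `m/2` knot spans of
width `2h` per direction). -/
def TensorSplineCoarse (d m p : ℕ) : Submodule ℝ ((Fin d → ℝ) → ℝ) :=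
  TensorSpline d (m / 2) p

/-- `v = T_c u` is the `a(·,·)`-orthogonal (Galerkin) projection of `u` onto `(S_c)^d`. -/
def IsGalerkinCoarseProj (d m p : ℕ) (u v : (Fin d → ℝ) → ℝ) : Prop :=
  v ∈ TensorSplineCoarse d m p ∧ ∀ w ∈ TensorSplineCoarse d m p, aForm d (u - v) w = 0

end SplineMG

namespace SplineMG

/-!
The squared norms `aₖ = ‖u⁽ᵏ⁾‖₀²`, `0 ≤ k ≤ p`, form a log-convex sequence: integrating by parts,
`‖u⁽ᵏ⁺¹⁾‖₀² = -∫ u⁽ᵏ⁾ u⁽ᵏ⁺²⁾`, because one of `k`, `k + 1` is odd and so the boundary term vanishes,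
and Cauchy–Schwarz gives `aₖ₊₁² ≤ aₖ aₖ₊₂`. The quotients `aₖ₊₁ / aₖ` therefore increase with `k`,
and the last one, `aₚ / aₚ₋₁`, is at most `12 h⁻²` since `u⁽ᵖ⁻¹⁾` is affine on each interval.
-/

lemma le_mul_of_log_convex {a : ℕ → ℝ} {C : ℝ} {n : ℕ} (ha : ∀ k, 0 ≤ a k) (hC : 0 ≤ C)
    (hconvex : ∀ k < n, a (k + 1) ^ 2 ≤ a k * a (k + 2)) (hlast : a (n + 1) ≤ C * a n) :
    a 1 ≤ C * a 0 := by
  induction n with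
  | zero => exact hlast
  | succ n ih =>
    refine ih (fun k hk ↦ hconvex k (by lia)) ?_
    rcases (ha (n + 1)).eq_or_lt with hzero | hpos
    · rw [← hzero]
      exact mul_nonneg hC (ha n)
    · refine le_of_mul_le_mul_right ?_ hpos
      calc a (n + 1) * a (n + 1) = a (n + 1) ^ 2 := (sq _).symm
        _ ≤ a n * a (n + 2) := hconvex n n.lt_succ_self
        _ ≤ a n * (C * a (n + 1)) := mul_le_mul_of_nonneg_left hlast (ha n)
        _ = C * a n * a (n + 1) := by ring

lemma sq_integral_mul_le {α : Type*} [MeasurableSpace α] {μ : Measure α} {f g : α → ℝ}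
    (hf : MemLp f 2 μ) (hg : MemLp g 2 μ) :
    (∫ x, f x * g x ∂μ) ^ 2 ≤ (∫ x, f x ^ 2 ∂μ) * ∫ x, g x ^ 2 ∂μ := by
  have inner_toLp {φ ψ : α → ℝ} (hφ : MemLp φ 2 μ) (hψ : MemLp ψ 2 μ) :
      inner ℝ (hφ.toLp φ) (hψ.toLp ψ) = ∫ x, φ x * ψ x ∂μ := by
    rw [L2.inner_def]
    refine integral_congr_ae ?_
    filter_upwards [hφ.coeFn_toLp, hψ.coeFn_toLp] with x hx hy
    rw [hx, hy, RCLike.inner_apply, conj_trivial, mul_comm]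
  simpa only [inner_toLp, sq] using real_inner_mul_inner_self_le (hf.toLp f) (hg.toLp g)

lemma integral_sq_deriv_eq_neg_integral_mul {f f' f'' : ℝ → ℝ} {a b : ℝ} {s : Set ℝ}
    (hab : a ≤ b) (hs : s.Countable) (hf : ContinuousOn f (Icc a b))
    (hf' : ContinuousOn f' (Icc a b)) (hderiv : ∀ x ∈ Ioo a b \ s, HasDerivAt f (f' x) x)
    (hderiv' : ∀ x ∈ Ioo a b \ s, HasDerivAt f' (f'' x) x)
    (hf'' : IntervalIntegrable f'' volume a b) (hends : f a * f' a = f b * f' b) :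
    ∫ x in a..b, f' x ^ 2 = -∫ x in a..b, f x * f'' x := by
  have hsq : IntervalIntegrable (fun x ↦ f' x ^ 2) volume a b :=
    (hf'.pow 2).intervalIntegrable_of_Icc hab
  have hmul : IntervalIntegrable (fun x ↦ f x * f'' x) volume a b :=
    hf''.continuousOn_mul (by rwa [uIcc_of_le hab])
  have hparts : ∫ x in a..b, (f' x ^ 2 + f x * f'' x) = f b * f' b - f a * f' a :=
    integral_eq_of_hasDerivAt_off_countable_of_le (fun x ↦ f x * f' x) _ hab hs (hf.mul hf')
      (fun x hx ↦ ((hderiv x hx).mul (hderiv' x hx)).congr_deriv (by ring)) (hsq.add hmul)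
  rw [intervalIntegral.integral_add hsq hmul] at hparts
  linarith

lemma sq_integral_sq_deriv_le {f f' f'' : ℝ → ℝ} {a b : ℝ} {s : Set ℝ}
    (hab : a ≤ b) (hs : s.Countable) (hf : ContinuousOn f (Icc a b))
    (hf' : ContinuousOn f' (Icc a b)) (hderiv : ∀ x ∈ Ioo a b \ s, HasDerivAt f (f' x) x)
    (hderiv' : ∀ x ∈ Ioo a b \ s, HasDerivAt f' (f'' x) x)
    (hf'' : MemLp f'' 2 (volume.restrict (Ioc a b))) (hends : f a * f' a = f b * f' b) :
    (∫ x in a..b, f' x ^ 2) ^ 2 ≤ (∫ x in a..b, f x ^ 2) * ∫ x in a..b, f'' x ^ 2 := by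
  have hint : IntervalIntegrable f'' volume a b :=
    (intervalIntegrable_iff_integrableOn_Ioc_of_le hab).2 (hf''.integrable one_le_two)
  have hmem : MemLp f 2 (volume.restrict (Ioc a b)) :=
    (memLp_two_iff_integrable_sq
      (hf.intervalIntegrable_of_Icc hab).aestronglyMeasurable).2
      ((hf.pow 2).intervalIntegrable_of_Icc hab).1
  rw [integral_sq_deriv_eq_neg_integral_mul hab hs hf hf' hderiv hderiv' hint hends, neg_sq]
  simpa only [intervalIntegral.integral_of_le hab] using sq_integral_mul_le hmem hf''

lemma sq_length_mul_integral_sq_derivative_le {q : Polynomial ℝ} (hq : q.natDegree ≤ 1) {a b : ℝ}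
    (hab : a ≤ b) :
    (b - a) ^ 2 * ∫ x in a..b, q.derivative.eval x ^ 2 ≤ 12 * ∫ x in a..b, q.eval x ^ 2 := by
  obtain ⟨d, c, rfl⟩ := Polynomial.exists_eq_X_add_C_of_natDegree_le_one hq
  have hderiv : ∫ x in a..b,
      (Polynomial.C d * Polynomial.X + Polynomial.C c).derivative.eval x ^ 2 = (b - a) * d ^ 2 := by
    simp
  -- The squared midpoint value plus the variance term, which is where the `12` comes from.
  have hint : ∫ x in a..b, (Polynomial.C d * Polynomial.X + Polynomial.C c).eval x ^ 2
      = (b - a) * (d * ((a + b) / 2) + c) ^ 2 + d ^ 2 * (b - a) ^ 3 / 12 := by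
    simp only [Polynomial.eval_add, Polynomial.eval_mul, Polynomial.eval_C, Polynomial.eval_X]
    rw [intervalIntegral.integral_eq_sub_of_hasDerivAt
      (f := fun x ↦ c ^ 2 * x + c * d * x ^ 2 + d ^ 2 * x ^ 3 / 3) (fun x _ ↦ ?_)
      (Continuous.intervalIntegrable (by fun_prop) a b)]
    · ring
    · exact ((((hasDerivAt_id x).const_mul (c ^ 2)).add
        ((hasDerivAt_pow 2 x).const_mul (c * d))).add
        (((hasDerivAt_pow 3 x).const_mul (d ^ 2)).div_const 3)).congr_deriv (by
          simp only [mul_one, Nat.cast_ofNat, Nat.add_one_sub_one, pow_one]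
          ring)
  rw [hderiv, hint]
  have hmean : 0 ≤ (b - a) * (d * ((a + b) / 2) + c) ^ 2 :=
    mul_nonneg (sub_nonneg.2 hab) (sq_nonneg _)
  linarith

/-- Piecewise polynomials of degree at most `d` on the partition `t 0 ≤ t 1 ≤ ⋯ ≤ t n`. Nothing is
required of the values at the knots, so that derivatives of splines are covered. -/
def IsPiecewisePoly (t : ℕ → ℝ) (n d : ℕ) (f : ℝ → ℝ) : Prop :=
  ∀ j < n, ∃ q : Polynomial ℝ, q.natDegree ≤ d ∧ EqOn f q.eval (Ioo (t j) (t (j + 1)))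

namespace IsPiecewisePoly

variable {t : ℕ → ℝ} {n d : ℕ} {f : ℝ → ℝ}

protected lemma pow (hf : IsPiecewisePoly t n d f) (k : ℕ) :
    IsPiecewisePoly t n (k * d) (fun x ↦ f x ^ k) := fun j hj ↦ by
  obtain ⟨q, hdeg, heq⟩ := hf j hj
  refine ⟨q ^ k, Polynomial.natDegree_pow_le_of_le k hdeg, fun x hx ↦ ?_⟩
  simp only [heq hx, Polynomial.eval_pow]

protected lemma deriv (hf : IsPiecewisePoly t n d f) : IsPiecewisePoly t n (d - 1) (deriv f) :=
  fun j hj ↦ by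
  obtain ⟨q, hdeg, heq⟩ := hf j hj
  refine ⟨q.derivative, q.natDegree_derivative_le.trans (by lia), fun x hx ↦ ?_⟩
  rw [heq.deriv isOpen_Ioo hx, Polynomial.deriv]

protected lemma iteratedDeriv (hf : IsPiecewisePoly t n d f) (k : ℕ) :
    IsPiecewisePoly t n (d - k) (iteratedDeriv k f) := by
  induction k with
  | zero => simpa only [iteratedDeriv_zero, Nat.sub_zero] using hf
  | succ k ih => simpa only [iteratedDeriv_succ, Nat.sub_sub] using ih.deriv

protected lemma hasDerivAt (hf : IsPiecewisePoly t n d f) (ht : Monotone t) {x : ℝ}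
    (hx : x ∈ Ioo (t 0) (t n) \ range t) : HasDerivAt f (deriv f x) x := by
  obtain ⟨j, hj, hxj⟩ : ∃ j ∈ Ico 0 n, x ∈ Ioc (t j) (t (j + 1)) := by
    simpa only [Nat.succ_eq_succ, Nat.succ_eq_add_one, mem_iUnion, exists_prop] using
      (ht.biUnion_Ico_Ioc_map_succ 0 n).ge (Ioo_subset_Ioc_self hx.1)
  obtain ⟨q, -, heq⟩ := hf j hj.2
  have hmem : x ∈ Ioo (t j) (t (j + 1)) :=
    ⟨hxj.1, hxj.2.lt_of_ne fun hknot ↦ hx.2 ⟨j + 1, hknot.symm⟩⟩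
  have hlocal : f =ᶠ[nhds x] q.eval := heq.eventuallyEq_of_mem (isOpen_Ioo.mem_nhds hmem)
  exact (hlocal.differentiableAt_iff.2 q.differentiableAt).hasDerivAt

lemma intervalIntegrable_succ (hf : IsPiecewisePoly t n d f) (ht : Monotone t) {j : ℕ}
    (hj : j < n) : IntervalIntegrable f volume (t j) (t (j + 1)) := by
  obtain ⟨q, -, heq⟩ := hf j hj
  refine (q.continuous.intervalIntegrable _ _).congr_uIoo ?_
  rw [uIoo_of_le (ht j.le_succ)]
  exact heq.symm

protected lemma intervalIntegrable (hf : IsPiecewisePoly t n d f) (ht : Monotone t) :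
    IntervalIntegrable f volume (t 0) (t n) :=
  .trans_iterate fun _ hj ↦ hf.intervalIntegrable_succ ht hj

lemma memLp_two (hf : IsPiecewisePoly t n d f) (ht : Monotone t) :
    MemLp f 2 (volume.restrict (Ioc (t 0) (t n))) :=
  (memLp_two_iff_integrable_sq (hf.intervalIntegrable ht).aestronglyMeasurable).2
    ((hf.pow 2).intervalIntegrable ht).1

lemma integral_sq_eq_sum (hf : IsPiecewisePoly t n d f) (ht : Monotone t) :
    ∫ x in t 0..t n, f x ^ 2 = ∑ j ∈ Finset.range n, ∫ x in t j..t (j + 1), f x ^ 2 :=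
  (intervalIntegral.sum_integral_adjacent_intervals (a := t)
    fun _ hj ↦ (hf.pow 2).intervalIntegrable_succ ht hj).symm

lemma integral_sq_deriv_le_of_degree_one {h : ℝ} (hf : IsPiecewisePoly t n 1 f) (ht : Monotone t)
    (hh : 0 < h) (hmesh : ∀ j < n, h ≤ t (j + 1) - t j) :
    ∫ x in t 0..t n, deriv f x ^ 2 ≤ 12 / h ^ 2 * ∫ x in t 0..t n, f x ^ 2 := by
  rw [hf.deriv.integral_sq_eq_sum ht, hf.integral_sq_eq_sum ht, Finset.mul_sum]
  refine Finset.sum_le_sum fun j hj ↦ ?_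
  obtain ⟨q, hdeg, heq⟩ := hf j (Finset.mem_range.1 hj)
  have hle : t j ≤ t (j + 1) := ht j.le_succ
  have hf_sq : ∫ x in t j..t (j + 1), f x ^ 2 = ∫ x in t j..t (j + 1), q.eval x ^ 2 :=
    intervalIntegral.integral_congr_Ioo_of_le hle fun x hx ↦ by simp only [heq hx]
  have hderiv_sq : ∫ x in t j..t (j + 1), deriv f x ^ 2
      = ∫ x in t j..t (j + 1), q.derivative.eval x ^ 2 :=
    intervalIntegral.integral_congr_Ioo_of_le hle fun x hx ↦ by
      simp only [heq.deriv isOpen_Ioo hx, Polynomial.deriv]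
  rw [hf_sq, hderiv_sq, div_mul_eq_mul_div, le_div_iff₀' (pow_pos hh 2)]
  calc h ^ 2 * ∫ x in t j..t (j + 1), q.derivative.eval x ^ 2
      ≤ (t (j + 1) - t j) ^ 2 * ∫ x in t j..t (j + 1), q.derivative.eval x ^ 2 := by
        gcongr
        · exact intervalIntegral.integral_nonneg hle fun _ _ ↦ sq_nonneg _
        · exact hmesh j (Finset.mem_range.1 hj)
    _ ≤ 12 * ∫ x in t j..t (j + 1), q.eval x ^ 2 :=
        sq_length_mul_integral_sq_derivative_le hdeg hle

lemma sq_integral_sq_iteratedDeriv_le {k : ℕ} (hf : IsPiecewisePoly t n d f) (ht : Monotone t)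
    (hsmooth : ContDiff ℝ (k + 1 : ℕ) f)
    (hends : iteratedDeriv k f (t 0) * iteratedDeriv (k + 1) f (t 0)
      = iteratedDeriv k f (t n) * iteratedDeriv (k + 1) f (t n)) :
    (∫ x in t 0..t n, iteratedDeriv (k + 1) f x ^ 2) ^ 2
      ≤ (∫ x in t 0..t n, iteratedDeriv k f x ^ 2)
        * ∫ x in t 0..t n, iteratedDeriv (k + 2) f x ^ 2 := by
  have hcont {i : ℕ} (hi : i ≤ k + 1) : ContinuousOn (iteratedDeriv i f) (Icc (t 0) (t n)) :=
    (hsmooth.continuous_iteratedDeriv i (mod_cast hi)).continuousOn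
  have hderiv (i : ℕ) (x : ℝ) (hx : x ∈ Ioo (t 0) (t n) \ range t) :
      HasDerivAt (iteratedDeriv i f) (iteratedDeriv (i + 1) f x) x := by
    rw [iteratedDeriv_succ]
    exact (hf.iteratedDeriv i).hasDerivAt ht hx
  exact sq_integral_sq_deriv_le (ht n.zero_le) (countable_range t) (hcont k.le_succ) (hcont le_rfl)
    (hderiv k) (hderiv (k + 1)) ((hf.iteratedDeriv (k + 2)).memLp_two ht) hends

theorem integral_sq_deriv_le {p : ℕ} {h : ℝ} (hf : IsPiecewisePoly t n (p + 1) f)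
    (ht : Monotone t) (hh : 0 < h) (hmesh : ∀ j < n, h ≤ t (j + 1) - t j)
    (hsmooth : ContDiff ℝ p f)
    (hends : ∀ k < p, iteratedDeriv k f (t 0) * iteratedDeriv (k + 1) f (t 0)
      = iteratedDeriv k f (t n) * iteratedDeriv (k + 1) f (t n)) :
    ∫ x in t 0..t n, deriv f x ^ 2 ≤ 12 / h ^ 2 * ∫ x in t 0..t n, f x ^ 2 := by
  have hlast : ∫ x in t 0..t n, iteratedDeriv (p + 1) f x ^ 2
      ≤ 12 / h ^ 2 * ∫ x in t 0..t n, iteratedDeriv p f x ^ 2 := by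
    have hdeg : IsPiecewisePoly t n 1 (iteratedDeriv p f) := by
      simpa only [Nat.add_sub_cancel_left] using hf.iteratedDeriv p
    simpa only [iteratedDeriv_succ] using
      hdeg.integral_sq_deriv_le_of_degree_one ht hh hmesh
  simpa only [iteratedDeriv_zero, iteratedDeriv_one] using le_mul_of_log_convex
    (a := fun k ↦ ∫ x in t 0..t n, iteratedDeriv k f x ^ 2)
    (fun k ↦ intervalIntegral.integral_nonneg (ht n.zero_le) fun _ _ ↦ sq_nonneg _)
    (by positivity)
    (fun k hk ↦ hf.sq_integral_sq_iteratedDeriv_le ht (hsmooth.of_le (mod_cast hk)) (hends k hk))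
    hlast

end IsPiecewisePoly

section Spline

variable {m p : ℕ} {u : ℝ → ℝ}

lemma Ioo_subset_pieceSet (m j : ℕ) : Ioo ((j : ℝ) / m) ((j + 1 : ℕ) / m) ⊆ pieceSet m j := by
  rintro x ⟨hleft, hright⟩
  rw [Nat.cast_succ] at hright
  left
  split_ifs with hj
  · simpa [hj] using hright.le
  · exact ⟨hleft.le, hright.le⟩

namespace IsSpline

lemma isPiecewisePoly (hu : IsSpline m p u) : IsPiecewisePoly (fun j ↦ (j : ℝ) / m) m p u :=
  fun j hj ↦ by
  obtain ⟨q, hdeg, heq⟩ := hu.2 j hj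
  exact ⟨q, hdeg, fun x hx ↦ heq x (Ioo_subset_pieceSet m j hx)⟩

lemma contDiffAt_of_le_zero (hu : IsSpline m p u) (hm : 1 ≤ m) {x : ℝ} (hx : x ≤ 0)
    {r : WithTop ℕ∞} : ContDiffAt ℝ r u x := by
  obtain ⟨q, -, heq⟩ := hu.2 0 hm
  refine (q.contDiff_aeval r).contDiffAt.congr_of_eventuallyEq ?_
  filter_upwards [Iic_mem_nhds (hx.trans_lt (by positivity : (0 : ℝ) < 1 / m))] with y hy
  exact heq y (Or.inl (by simpa using hy))

lemma contDiffAt_of_one_le (hu : IsSpline m p u) (hm : 1 ≤ m) {x : ℝ} (hx : 1 ≤ x)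
    {r : WithTop ℕ∞} : ContDiffAt ℝ r u x := by
  obtain ⟨q, -, heq⟩ := hu.2 (m - 1) (by lia)
  have hlast : ((m : ℝ) - 1) / m < 1 := by
    rw [div_lt_one (by positivity)]
    exact sub_one_lt _
  refine (q.contDiff_aeval r).contDiffAt.congr_of_eventuallyEq ?_
  filter_upwards [Ici_mem_nhds (hlast.trans_le hx)] with y hy
  exact heq y (Or.inr (by simpa using hy))

protected lemma contDiff (hu : IsSpline m p u) (hm : 1 ≤ m) : ContDiff ℝ (p - 1 : ℕ) u := by
  refine contDiff_iff_contDiffAt.2 fun x ↦ ?_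
  rcases le_or_gt x 0 with hx | hx
  · exact hu.contDiffAt_of_le_zero hm hx
  rcases le_or_gt 1 x with hx' | hx'
  · exact hu.contDiffAt_of_one_le hm hx'
  · exact hu.1.contDiffAt (isOpen_Ioo.mem_nhds ⟨hx, hx'⟩)

lemma h1semiSq_le (hu : IsSpline m p u) (hm : 1 ≤ m)
    (hends : ∀ k < p - 1, iteratedDeriv k u 0 * iteratedDeriv (k + 1) u 0
      = iteratedDeriv k u 1 * iteratedDeriv (k + 1) u 1) :
    h1semiSq u ≤ 12 * (m : ℝ) ^ 2 * l2normSq u := by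
  have hm_pos : (0 : ℝ) < m := by exact_mod_cast hm
  have hdeg : IsPiecewisePoly (fun j ↦ (j : ℝ) / m) m (p - 1 + 1) u := fun j hj ↦
    (hu.isPiecewisePoly j hj).imp fun _ hq ↦ ⟨hq.1.trans (by lia), hq.2⟩
  have hmono : Monotone fun j : ℕ ↦ (j : ℝ) / m := fun i j hij ↦ by
    simp only
    gcongr
  have hmesh (j : ℕ) (_ : j < m) : 1 / (m : ℝ) ≤ ((j + 1 : ℕ) : ℝ) / m - (j : ℝ) / m := by
    rw [← sub_div, Nat.cast_succ, add_sub_cancel_left]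
  have hends' : ∀ k < p - 1, iteratedDeriv k u ((0 : ℕ) / m) * iteratedDeriv (k + 1) u ((0 : ℕ) / m)
      = iteratedDeriv k u (m / m) * iteratedDeriv (k + 1) u (m / m) := by
    simpa only [Nat.cast_zero, zero_div, div_self hm_pos.ne'] using hends
  have hmain := hdeg.integral_sq_deriv_le hmono (one_div_pos.2 hm_pos) hmesh (hu.contDiff hm) hends'
  simpa only [h1semiSq, l2normSq, Nat.cast_zero, zero_div, div_self hm_pos.ne',
    intervalIntegral.integral_of_le zero_le_one, integral_Ioc_eq_integral_Ioo, one_div, inv_pow,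
    div_inv_eq_mul] using hmain

end IsSpline

lemma IsSpline0.iteratedDeriv_mul_iteratedDeriv_succ_eq_zero (hu : IsSpline0 m p u) {k : ℕ}
    (hk : k < p - 1) :
    iteratedDeriv k u 0 * iteratedDeriv (k + 1) u 0 = 0 ∧
      iteratedDeriv k u 1 * iteratedDeriv (k + 1) u 1 = 0 := by
  rcases k.even_or_odd' with ⟨l, rfl | rfl⟩
  · have hodd := hu.2 l (by lia)
    simp only [hodd, mul_zero, and_self]
  · have hodd := hu.2 l (by lia)
    simp only [hodd, zero_mul, and_self]

/-- The endpoint condition also admits periodic splines, and splines whose even derivatives of order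
less than `p` vanish at both endpoints. -/
theorem inverse_inequality_S0_general (hm : 1 ≤ m) (hu : IsSpline m p u)
    (hends : ∀ k < p - 1, iteratedDeriv k u 0 * iteratedDeriv (k + 1) u 0
      = iteratedDeriv k u 1 * iteratedDeriv (k + 1) u 1) :
    h1semi u ≤ 2 * Real.sqrt 3 * (m : ℝ) * l2norm u := by
  refine Real.sqrt_le_iff.2 ⟨by unfold l2norm; positivity, ?_⟩
  have hnonneg : 0 ≤ l2normSq u := integral_nonneg fun x ↦ sq_nonneg (u x)
  calc h1semiSq u ≤ 12 * (m : ℝ) ^ 2 * l2normSq u := hu.h1semiSq_le hm hends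
    _ = (2 * Real.sqrt 3 * (m : ℝ) * l2norm u) ^ 2 := by
      rw [l2norm, mul_pow, mul_pow, mul_pow, Real.sq_sqrt hnonneg, Real.sq_sqrt zero_le_three]
      ring

end Spline

/-- Theorem `thm:inverse`: for every mesh size `h = 1/m` and every
spline degree `p ≥ 1`, the inverse inequality `|u|₁ ≤ 2√3 · h⁻¹ · ‖u‖₀` holds for
all `u ∈ S₀`, with the constant `2√3` independent of `h` and `p`. -/
theorem inverse_inequality_S0 :
    ∀ m p : ℕ, 1 ≤ m → 1 ≤ p → ∀ u : ℝ → ℝ, IsSpline0 m p u →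
      h1semi u ≤ 2 * Real.sqrt 3 * (m : ℝ) * l2norm u := by
  intro m p hm _ u hu
  exact inverse_inequality_S0_general hm hu.1 fun k hk ↦
    have hzero := hu.iteratedDeriv_mul_iteratedDeriv_succ_eq_zero hk
    hzero.1.trans hzero.2.symm

end SplineMG
end
end

section
/- The spline space S has dimension dim S = m + p, and the subspace S_0 satisfies dim S_0 ≥ dim S − p. Moreover, if p + 1 ≤ m, then dim S_0 = m + p − 2⌊p/2⌋ exactly. -/
noncomputable section

open MeasureTheory Set

namespace SplineMG

open Polynomial Filter Topology

/-! A spline of degree `p` is a polynomial of degree at most `p` plus one multiple of the truncated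
power `(x - t)₊ ^ p` for each interior knot `t`: at a knot, two adjacent pieces agree to order
`p - 1`, so their difference is a multiple of `(X - t) ^ p`. This gives `dim S = m + p`.

The `2⌊p/2⌋` boundary functionals defining `S₀` are linearly independent already on polynomials of
degree at most `p`, because an antiderivative of a Lidstone interpolant takes arbitrary prescribed
odd derivatives at both endpoints. Hence `dim S₀ = m + p - 2⌊p/2⌋` for every `m ≥ 1`. -/

section Polynomial

variable {K : Type*} [Field K]

instance finiteDimensional_degreeLT (n : ℕ) : FiniteDimensional K (degreeLT K n) :=
  (degreeLTEquiv K n).symm.finiteDimensional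

theorem mem_degreeLT_succ_iff_natDegree_le {q : K[X]} {n : ℕ} :
    q ∈ degreeLT K (n + 1) ↔ q.natDegree ≤ n := by
  rw [degreeLT_succ_eq_degreeLE, mem_degreeLE, natDegree_le_iff_degree_le]

theorem exists_mem_degreeLT_two_eval_eq {a b : K} (hab : a ≠ b) (y z : K) :
    ∃ q ∈ degreeLT K 2, q.eval a = y ∧ q.eval b = z := by
  have hba : b - a ≠ 0 := sub_ne_zero.2 hab.symm
  refine ⟨C ((z - y) / (b - a)) * (X - C a) + C y, ?_, by simp, by simp [hba]⟩
  rw [mem_degreeLT_succ_iff_natDegree_le]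
  compute_degree

variable [CharZero K]

theorem exists_mem_degreeLT_succ_derivative_eq {n : ℕ} {r : K[X]} (hr : r ∈ degreeLT K n) :
    ∃ q ∈ degreeLT K (n + 1), derivative q = r := by
  refine ⟨∑ i ∈ Finset.range n, monomial (i + 1) (r.coeff i / (i + 1 : ℕ)), ?_, ?_⟩
  · refine Submodule.sum_mem _ fun i hi => mem_degreeLT_succ_iff_natDegree_le.2 ?_
    exact (natDegree_monomial_le _).trans (Finset.mem_range.1 hi)
  · have hi (i : ℕ) : ((i + 1 : ℕ) : K) ≠ 0 := Nat.cast_ne_zero.2 i.succ_ne_zero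
    simp only [derivative_sum, derivative_monomial, add_tsub_cancel_right, div_mul_cancel₀ _ (hi _)]
    ext i
    rw [finsetSum_coeff]
    simp only [coeff_monomial, Finset.sum_ite_eq', Finset.mem_range, ite_eq_left_iff, not_lt]
    exact fun hni => (coeff_eq_zero_of_degree_lt
      ((mem_degreeLT.1 hr).trans_le (Nat.cast_le.2 hni))).symm

theorem exists_lidstone_interpolant {a b : K} (hab : a ≠ b) (N : ℕ) (α β : ℕ → K) :
    ∃ q ∈ degreeLT K (2 * N), ∀ l < N,
      (derivative^[2 * l] q).eval a = α l ∧ (derivative^[2 * l] q).eval b = β l := by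
  induction N generalizing α β with
  | zero => exact ⟨0, zero_mem _, by simp⟩
  | succ N ih =>
    obtain ⟨r, hr, hr_eval⟩ := ih (fun l => α (l + 1)) (fun l => β (l + 1))
    obtain ⟨r₁, hr₁, hr₁_deriv⟩ := exists_mem_degreeLT_succ_derivative_eq hr
    obtain ⟨r₂, hr₂, hr₂_deriv⟩ := exists_mem_degreeLT_succ_derivative_eq hr₁
    obtain ⟨s, hs, hsa, hsb⟩ :=
      exists_mem_degreeLT_two_eval_eq hab (α 0 - r₂.eval a) (β 0 - r₂.eval b)
    have hs_deriv : derivative^[2] s = 0 :=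
      iterate_derivative_eq_zero (Nat.lt_succ_of_le (mem_degreeLT_succ_iff_natDegree_le.1 hs))
    have h_deriv : derivative^[2] (r₂ + s) = r := by
      rw [iterate_map_add, hs_deriv, add_zero, ← hr₁_deriv, ← hr₂_deriv]
      rfl
    refine ⟨r₂ + s, add_mem hr₂ (degreeLT_mono (by lia) hs), ?_⟩
    rintro (_ | l) hl
    · simp [hsa, hsb]
    · rw [mul_add, Function.iterate_add_apply, mul_one, h_deriv]
      exact hr_eval l (by lia)

theorem exists_odd_derivative_interpolant {a b : K} (hab : a ≠ b) (N : ℕ) (α β : ℕ → K) :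
    ∃ q ∈ degreeLT K (2 * N + 1), ∀ l < N,
      (derivative^[2 * l + 1] q).eval a = α l ∧ (derivative^[2 * l + 1] q).eval b = β l := by
  obtain ⟨r, hr, hr_eval⟩ := exists_lidstone_interpolant hab N α β
  obtain ⟨q, hq, rfl⟩ := exists_mem_degreeLT_succ_derivative_eq hr
  exact ⟨q, hq, hr_eval⟩

theorem X_sub_C_pow_dvd_of_isRoot_iterate_derivative {q : K[X]} {t : K} {p : ℕ}
    (hq : ∀ k < p, (derivative^[k] q).IsRoot t) : (X - C t) ^ p ∣ q := by
  rcases eq_or_ne q 0 with rfl | hq0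
  · exact dvd_zero _
  rcases p with _ | p
  · simp
  · rw [← le_rootMultiplicity_iff hq0, Nat.succ_le_iff]
    exact lt_rootMultiplicity_of_isRoot_iterate_derivative hq0 fun k hk => hq k (by lia)

end Polynomial

section Derivatives

variable {𝕜 : Type*} [NontriviallyNormedField 𝕜]

theorem contDiff_polynomial_eval (q : 𝕜[X]) (k : WithTop ℕ∞) :
    ContDiff 𝕜 k fun x => q.eval x := by
  simp only [← coe_aeval_eq_eval]
  exact q.contDiff_aeval k

theorem iteratedDeriv_polynomial_eval (q : 𝕜[X]) (k : ℕ) :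
    iteratedDeriv k (fun x => q.eval x) = fun x => (derivative^[k] q).eval x := by
  induction k with
  | zero => simp
  | succ k ih =>
    rw [iteratedDeriv_succ, ih, Function.iterate_succ_apply']
    exact funext fun _ => Polynomial.deriv _

theorem iteratedDeriv_eq_of_eventuallyEq_nhdsWithin {F : Type*} [NormedAddCommGroup F]
    [NormedSpace 𝕜 F] {f g : 𝕜 → F} {s : Set 𝕜} {x : 𝕜} {k : ℕ}
    (hs : UniqueDiffOn 𝕜 s) (hx : x ∈ s) (hf : ContDiffAt 𝕜 k f x) (hg : ContDiffAt 𝕜 k g x)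
    (hfg : f =ᶠ[𝓝[s] x] g) : iteratedDeriv k f x = iteratedDeriv k g x := by
  rw [← iteratedDerivWithin_eq_iteratedDeriv hs hf hx,
    ← iteratedDerivWithin_eq_iteratedDeriv hs hg hx,
    hfg.iteratedDerivWithin_eq (hfg.eq_of_nhdsWithin hx)]

theorem exists_eq_add_C_mul_X_sub_C_pow {p : ℕ} {u : ℝ → ℝ} {t : ℝ}
    (hu : ContDiffAt ℝ (p - 1 : ℕ) u t) {q r : ℝ[X]} (hq : q.natDegree ≤ p) (hr : r.natDegree ≤ p)
    (huq : u =ᶠ[𝓝[≤] t] fun x => q.eval x) (hur : u =ᶠ[𝓝[≥] t] fun x => r.eval x) :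
    ∃ c : ℝ, r = q + C c * (X - C t) ^ p := by
  have h_iteratedDeriv {s : Set ℝ} (hs : UniqueDiffOn ℝ s) (ht : t ∈ s) {f : ℝ[X]}
      (huf : u =ᶠ[𝓝[s] t] fun x => f.eval x) (k : ℕ) (hk : k < p) :
      iteratedDeriv k u t = (derivative^[k] f).eval t := by
    rw [iteratedDeriv_eq_of_eventuallyEq_nhdsWithin hs ht
      (hu.of_le (by exact_mod_cast Nat.le_sub_one_of_lt hk))
      (contDiff_polynomial_eval f _).contDiffAt huf,
      iteratedDeriv_polynomial_eval]
  have hdvd : (X - C t) ^ p ∣ r - q := by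
    refine X_sub_C_pow_dvd_of_isRoot_iterate_derivative fun k hk => ?_
    rw [IsRoot.def, iterate_derivative_sub, eval_sub,
      ← h_iteratedDeriv (uniqueDiffOn_Iic t) self_mem_Iic huq k hk,
      ← h_iteratedDeriv (uniqueDiffOn_Ici t) self_mem_Ici hur k hk, sub_self]
  have hmonic : ((X - C t) ^ p).Monic := (monic_X_sub_C t).pow p
  have hdeg : (r - q).natDegree ≤ ((X - C t) ^ p).natDegree := by
    rw [natDegree_pow, natDegree_X_sub_C, mul_one]
    exact (natDegree_sub_le _ _).trans (max_le hr hq)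
  refine ⟨(r - q).leadingCoeff, ?_⟩
  rw [← eq_leadingCoeff_mul_of_monic_of_dvd_of_natDegree_le hmonic hdvd hdeg, add_sub_cancel]

theorem hasDerivAt_max_zero_pow (n : ℕ) (x : ℝ) :
    HasDerivAt (fun y : ℝ => max y 0 ^ (n + 2)) ((n + 2 : ℕ) * max x 0 ^ (n + 1)) x := by
  refine hasDerivAt_of_hasDerivAt_of_ne' (x := 0)
    (g := fun x => (n + 2 : ℕ) * max x 0 ^ (n + 1)) (fun y hy => ?_) (by fun_prop) (by fun_prop) x
  rcases hy.lt_or_gt with hy | hy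
  · have h_eq : (fun y : ℝ => max y 0 ^ (n + 2)) =ᶠ[𝓝 y] fun _ => 0 := by
      filter_upwards [Iic_mem_nhds hy] with z hz
      simp [max_eq_right (mem_Iic.1 hz)]
    simpa [max_eq_right hy.le] using (hasDerivAt_const y (0 : ℝ)).congr_of_eventuallyEq h_eq
  · have h_eq : (fun y : ℝ => max y 0 ^ (n + 2)) =ᶠ[𝓝 y] fun y => y ^ (n + 2) := by
      filter_upwards [Ici_mem_nhds hy] with z hz
      rw [max_eq_left (mem_Ici.1 hz)]
    simpa [max_eq_left hy.le] using (hasDerivAt_pow (n + 2) y).congr_of_eventuallyEq h_eq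

theorem contDiff_max_zero_pow (n : ℕ) : ContDiff ℝ n (fun y : ℝ => max y 0 ^ (n + 1)) := by
  induction n with
  | zero =>
    rw [Nat.cast_zero, contDiff_zero]
    fun_prop
  | succ n ih =>
    have h_deriv : deriv (fun y : ℝ => max y 0 ^ (n + 2)) =
        fun x => ((n + 2 : ℕ) : ℝ) * max x 0 ^ (n + 1) :=
      funext fun x => (hasDerivAt_max_zero_pow n x).deriv
    rw [Nat.cast_succ, contDiff_succ_iff_deriv, h_deriv]
    exact ⟨fun x => (hasDerivAt_max_zero_pow n x).differentiableAt, by simp,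
      contDiff_const.mul ih⟩

end Derivatives

section KnotPieces

variable {n : ℕ} {t : Fin n → ℝ} {k : ℕ} {x : ℝ}

/-- The `k`-th piece, `0 ≤ k ≤ n`, of the partition of `ℝ` by the knots `t 0 < ⋯ < t (n - 1)`:
the points lying weakly between `t (k - 1)` and `t k`, where the first and the last piece are
unbounded. -/
def knotPiece (t : Fin n → ℝ) (k : ℕ) : Set ℝ :=
  {x | ∀ j : Fin n, (j < k → t j ≤ x) ∧ (k ≤ j → x ≤ t j)}

theorem exists_mem_knotPiece (ht : Monotone t) (x : ℝ) : ∃ k ≤ n, x ∈ knotPiece t k := by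
  classical
  have h_exists : ∃ k : ℕ, ∀ j : Fin n, k ≤ j → x ≤ t j := ⟨n, fun j hj => by lia⟩
  refine ⟨Nat.find h_exists, Nat.find_min' h_exists fun j hj => by lia, fun j => ⟨fun hj => ?_,
    Nat.find_spec h_exists j⟩⟩
  obtain ⟨i, hji, hi⟩ : ∃ i : Fin n, (j : ℕ) ≤ i ∧ t i < x := by
    simpa using Nat.find_min h_exists hj
  exact (ht (Fin.le_def.2 hji)).trans hi.le

theorem knotPiece_mem_nhds (hx : ∀ j : Fin n, (j < k → t j < x) ∧ (k ≤ j → x < t j)) :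
    knotPiece t k ∈ 𝓝 x := by
  refine eventually_all.2 fun j => (eventually_imp_distrib_left.2 fun hj => ?_).and
    (eventually_imp_distrib_left.2 fun hj => ?_)
  · exact Ici_mem_nhds ((hx j).1 hj)
  · exact Iic_mem_nhds ((hx j).2 hj)

theorem infinite_knotPiece (ht : StrictMono t) (k : ℕ) : (knotPiece t k).Infinite := by
  obtain ⟨x, hlo, hhi⟩ := Order.exists_between_finsets
    ({j : Fin n | j < k}.toFinset.image t) ({j : Fin n | k ≤ j}.toFinset.image t) (by
      simp only [Finset.forall_mem_image, mem_toFinset, mem_ofPred_eq]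
      exact fun i hi j hj => ht (Fin.lt_def.2 (by lia)))
  simp only [Finset.forall_mem_image, mem_toFinset, mem_ofPred_eq] at hlo hhi
  exact infinite_of_mem_nhds x (knotPiece_mem_nhds fun j => ⟨@hlo j, @hhi j⟩)

theorem knotPiece_mem_nhdsLE (ht : StrictMono t) (i : Fin n) : knotPiece t i ∈ 𝓝[≤] t i := by
  refine eventually_all.2 fun j => (eventually_imp_distrib_left.2 fun hj => ?_).and
    (eventually_imp_distrib_left.2 fun hj => ?_)
  · exact mem_nhdsWithin_of_mem_nhds (Ici_mem_nhds (ht (Fin.lt_def.2 hj)))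
  · exact mem_of_superset self_mem_nhdsWithin (Iic_subset_Iic.2 (ht.monotone (Fin.le_def.2 hj)))

theorem knotPiece_succ_mem_nhdsGE (ht : StrictMono t) (i : Fin n) :
    knotPiece t (i + 1) ∈ 𝓝[≥] t i := by
  refine eventually_all.2 fun j => (eventually_imp_distrib_left.2 fun hj => ?_).and
    (eventually_imp_distrib_left.2 fun hj => ?_)
  · exact mem_of_superset self_mem_nhdsWithin
      (Ici_subset_Ici.2 (ht.monotone (Fin.le_def.2 (by lia))))
  · exact mem_nhdsWithin_of_mem_nhds (Iic_mem_nhds (ht (Fin.lt_def.2 hj)))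

end KnotPieces

section TruncatedPowers

variable {n p : ℕ} {t : Fin n → ℝ}

/-- Coefficients of a spline of degree `p` with `n` knots in the truncated power basis: its
polynomial on the leftmost piece, and the weight of the truncated power at each knot. -/
abbrev TruncPowCoeffs (n p : ℕ) : Type := degreeLT ℝ (p + 1) × (Fin n → ℝ)

theorem finrank_truncPowCoeffs (n p : ℕ) : Module.finrank ℝ (TruncPowCoeffs n p) = p + 1 + n := by
  rw [Module.finrank_prod, (degreeLTEquiv ℝ (p + 1)).finrank_eq, Module.finrank_fin_fun,
    Module.finrank_fin_fun]

/-- The spline `x ↦ q(x) + ∑ j, c j * (x - t j)₊ ^ p` with coefficients `(q, c)`. -/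
def truncPowSum (t : Fin n → ℝ) (p : ℕ) : TruncPowCoeffs n p →ₗ[ℝ] ℝ → ℝ :=
  (LinearMap.pi fun x => leval x ∘ₗ (degreeLT ℝ (p + 1)).subtype).coprod
    (Fintype.linearCombination ℝ fun j x => max (x - t j) 0 ^ p)

/-- The polynomial `q + ∑ j < k, c j • (X - t j) ^ p` that represents the spline with coefficients
`(q, c)` on the `k`-th piece. -/
def piecePoly (t : Fin n → ℝ) (p k : ℕ) : TruncPowCoeffs n p →ₗ[ℝ] ℝ[X] :=
  (degreeLT ℝ (p + 1)).subtype.coprod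
    (Fintype.linearCombination ℝ fun j : Fin n => if j < k then (X - C (t j)) ^ p else 0)

theorem truncPowSum_apply (e : TruncPowCoeffs n p) (x : ℝ) :
    truncPowSum t p e x = (e.1 : ℝ[X]).eval x + ∑ j, e.2 j * max (x - t j) 0 ^ p := by
  simp [truncPowSum, Fintype.linearCombination_apply, leval_apply]

theorem piecePoly_apply (k : ℕ) (e : TruncPowCoeffs n p) :
    piecePoly t p k e = e.1 + ∑ j : Fin n, e.2 j • if j < k then (X - C (t j)) ^ p else 0 :=
  rfl

theorem piecePoly_zero (e : TruncPowCoeffs n p) : piecePoly t p 0 e = e.1 := by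
  simp [piecePoly_apply]

theorem piecePoly_inl (k : ℕ) (q : degreeLT ℝ (p + 1)) : piecePoly t p k (q, 0) = q := by
  simp [piecePoly_apply]

theorem piecePoly_succ (i : Fin n) (e : TruncPowCoeffs n p) :
    piecePoly t p (i + 1) e = piecePoly t p i e + e.2 i • (X - C (t i)) ^ p := by
  have h_term (j : Fin n) : (e.2 j • if (j : ℕ) < i + 1 then (X - C (t j)) ^ p else 0) =
      (e.2 j • if (j : ℕ) < i then (X - C (t j)) ^ p else 0) +
        if j = i then e.2 i • (X - C (t i)) ^ p else 0 := by
    rcases lt_trichotomy j i with h | rfl | h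
    · simp [h.ne, Fin.lt_def.1 h, (Fin.lt_def.1 h).trans (Nat.lt_succ_self _)]
    · simp
    · simp [h.ne', (Fin.lt_def.1 h).not_gt, (Fin.lt_def.1 h).not_ge]
  simp only [piecePoly_apply, h_term, Finset.sum_add_distrib, Finset.sum_ite_eq', Finset.mem_univ,
    if_true, add_assoc]

theorem natDegree_piecePoly_le (k : ℕ) (e : TruncPowCoeffs n p) :
    (piecePoly t p k e).natDegree ≤ p := by
  refine natDegree_add_le_of_degree_le (mem_degreeLT_succ_iff_natDegree_le.1 e.1.2) ?_
  refine natDegree_sum_le_of_forall_le _ _ fun j _ => (natDegree_smul_le _ _).trans ?_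
  dsimp only
  split_ifs
  · rw [natDegree_pow, natDegree_X_sub_C, mul_one]
  · simp

theorem eqOn_truncPowSum_piecePoly (hp : p ≠ 0) (k : ℕ) (e : TruncPowCoeffs n p) :
    EqOn (truncPowSum t p e) (fun x => (piecePoly t p k e).eval x) (knotPiece t k) := by
  intro x hx
  simp only [truncPowSum_apply, piecePoly_apply, eval_add, eval_finsetSum, eval_smul, smul_eq_mul]
  congr! 3 with j
  split_ifs with hj
  · simp [(hx j).1 hj]
  · simp [(hx j).2 (not_lt.1 hj), hp]

theorem contDiff_truncPowSum (hp : p ≠ 0) (e : TruncPowCoeffs n p) :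
    ContDiff ℝ (p - 1 : ℕ) (truncPowSum t p e) := by
  have h_pow : ContDiff ℝ (p - 1 : ℕ) (fun y : ℝ => max y 0 ^ p) := by
    simpa only [Nat.sub_one_add_one hp] using contDiff_max_zero_pow (p - 1)
  rw [funext (truncPowSum_apply e)]
  exact (contDiff_polynomial_eval _ _).add
    (ContDiff.sum fun j _ => contDiff_const.mul (h_pow.comp (contDiff_id.sub contDiff_const)))

theorem exists_truncPowSum_eq (hp : p ≠ 0) (ht : StrictMono t) {u : ℝ → ℝ}
    (hu : ∀ j, ContDiffAt ℝ (p - 1 : ℕ) u (t j))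
    (hpiece : ∀ k ≤ n, ∃ q : ℝ[X], q.natDegree ≤ p ∧ EqOn u (fun x => q.eval x) (knotPiece t k)) :
    ∃ e, truncPowSum t p e = u := by
  choose! q hq_deg hq_eq using hpiece
  have h_jump (j : Fin n) : ∃ c : ℝ, q (j + 1) = q j + C c * (X - C (t j)) ^ p :=
    exists_eq_add_C_mul_X_sub_C_pow (hu j) (hq_deg j j.2.le) (hq_deg (j + 1) j.2)
      ((hq_eq j j.2.le).eventuallyEq_of_mem (knotPiece_mem_nhdsLE ht j))
      ((hq_eq (j + 1) j.2).eventuallyEq_of_mem (knotPiece_succ_mem_nhdsGE ht j))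
  choose c hc using h_jump
  let e : TruncPowCoeffs n p :=
    (⟨q 0, mem_degreeLT_succ_iff_natDegree_le.2 (hq_deg 0 n.zero_le)⟩, c)
  have h_piecePoly (k : ℕ) (hk : k ≤ n) : piecePoly t p k e = q k := by
    induction k with
    | zero => exact piecePoly_zero e
    | succ k ih => rw [piecePoly_succ ⟨k, hk⟩ e, ih (by lia), hc ⟨k, hk⟩, smul_eq_C_mul]
  refine ⟨e, funext fun x => ?_⟩
  obtain ⟨k, hk, hx⟩ := exists_mem_knotPiece ht.monotone x
  rw [eqOn_truncPowSum_piecePoly hp k e hx, h_piecePoly k hk, hq_eq k hk hx]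

theorem truncPowSum_injective (hp : p ≠ 0) (ht : StrictMono t) :
    Function.Injective (truncPowSum t p) := by
  refine (injective_iff_map_eq_zero _).2 fun e he => ?_
  have h_piecePoly (k : ℕ) : piecePoly t p k e = 0 :=
    eq_of_infinite_eval_eq _ _ <| (infinite_knotPiece ht k).mono fun x hx => by
      simpa [he] using (eqOn_truncPowSum_piecePoly hp k e hx).symm
  refine Prod.ext (Subtype.ext ?_) (funext fun j => ?_)
  · exact (piecePoly_zero e).symm.trans (h_piecePoly 0)
  · have h_jump : e.2 j • (X - C (t j)) ^ p = 0 := by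
      simpa [h_piecePoly] using (piecePoly_succ (t := t) j e).symm
    exact (smul_eq_zero.1 h_jump).resolve_right ((monic_X_sub_C _).pow p).ne_zero

theorem finrank_range_truncPowSum (hp : p ≠ 0) (ht : StrictMono t) :
    Module.finrank ℝ (LinearMap.range (truncPowSum t p)) = p + 1 + n := by
  rw [LinearMap.finrank_range_of_inj (truncPowSum_injective hp ht), finrank_truncPowCoeffs]

end TruncatedPowers

section BoundaryConditions

variable {n p : ℕ} {t : Fin n → ℝ} {a b : ℝ}

theorem iteratedDeriv_truncPowSum (hp : p ≠ 0) {k : ℕ} {x : ℝ}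
    (hx : ∀ j : Fin n, (j < k → t j < x) ∧ (k ≤ j → x < t j)) (e : TruncPowCoeffs n p) (i : ℕ) :
    iteratedDeriv i (truncPowSum t p e) x = (derivative^[i] (piecePoly t p k e)).eval x := by
  have h_eq := (eqOn_truncPowSum_piecePoly hp k e).eventuallyEq_of_mem (knotPiece_mem_nhds hx)
  rw [h_eq.iteratedDeriv_eq, iteratedDeriv_polynomial_eval]

/-- The derivatives of odd order `2 * l + 1 < p`, at a point `a` to the left and a point `b` to the
right of all knots, of the spline with given coefficients. -/
def endpointOddDerivs (t : Fin n → ℝ) (p : ℕ) (a b : ℝ) :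
    TruncPowCoeffs n p →ₗ[ℝ] Fin (p / 2) → ℝ × ℝ :=
  LinearMap.pi fun l =>
    (leval a ∘ₗ (derivative ^ (2 * (l : ℕ) + 1)) ∘ₗ piecePoly t p 0).prod
      (leval b ∘ₗ (derivative ^ (2 * (l : ℕ) + 1)) ∘ₗ piecePoly t p n)

theorem endpointOddDerivs_apply (e : TruncPowCoeffs n p) (l : Fin (p / 2)) :
    endpointOddDerivs t p a b e l =
      ((derivative^[2 * l + 1] (piecePoly t p 0 e)).eval a,
        (derivative^[2 * l + 1] (piecePoly t p n e)).eval b) := by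
  simp [endpointOddDerivs, Module.End.pow_apply, leval_apply]

theorem endpointOddDerivs_eq_zero_iff (hp : p ≠ 0) (ha : ∀ j, a < t j) (hb : ∀ j, t j < b)
    (e : TruncPowCoeffs n p) :
    endpointOddDerivs t p a b e = 0 ↔ ∀ l : ℕ, 2 * l + 1 < p →
      iteratedDeriv (2 * l + 1) (truncPowSum t p e) a = 0 ∧
        iteratedDeriv (2 * l + 1) (truncPowSum t p e) b = 0 := by
  have ha_piece (j : Fin n) : ((j : ℕ) < 0 → t j < a) ∧ (0 ≤ (j : ℕ) → a < t j) := by simp [ha j]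
  have hb_piece (j : Fin n) : ((j : ℕ) < n → t j < b) ∧ (n ≤ (j : ℕ) → b < t j) := by simp [hb j]
  have h_lt (l : ℕ) : 2 * l + 1 < p ↔ l < p / 2 := by lia
  simp only [funext_iff, Fin.forall_iff, endpointOddDerivs_apply, Pi.zero_apply, Prod.mk_eq_zero,
    h_lt, iteratedDeriv_truncPowSum hp ha_piece, iteratedDeriv_truncPowSum hp hb_piece]

theorem endpointOddDerivs_surjective (hab : a ≠ b) :
    Function.Surjective (endpointOddDerivs t p a b) := by
  intro y
  obtain ⟨q, hq, hq_eval⟩ := exists_odd_derivative_interpolant hab (p / 2)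
    (fun l => if hl : l < p / 2 then (y ⟨l, hl⟩).1 else 0)
    (fun l => if hl : l < p / 2 then (y ⟨l, hl⟩).2 else 0)
  refine ⟨(⟨q, degreeLT_mono (by lia) hq⟩, 0), funext fun l => ?_⟩
  obtain ⟨hqa, hqb⟩ := hq_eval l l.2
  rw [endpointOddDerivs_apply, piecePoly_inl, piecePoly_inl, hqa, hqb, dif_pos l.2, dif_pos l.2]

theorem finrank_ker_endpointOddDerivs_add (hab : a ≠ b) :
    Module.finrank ℝ (LinearMap.ker (endpointOddDerivs t p a b)) + 2 * (p / 2) = p + 1 + n := by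
  have h_rank := LinearMap.finrank_range_add_finrank_ker (endpointOddDerivs t p a b)
  rw [LinearMap.range_eq_top.2 (endpointOddDerivs_surjective hab), finrank_top,
    finrank_truncPowCoeffs] at h_rank
  simp only [Module.finrank_pi_fintype, Module.finrank_prod, Module.finrank_self, Finset.sum_const,
    Finset.card_univ, Fintype.card_fin, smul_eq_mul] at h_rank
  lia

end BoundaryConditions

section UniformPartition

variable {n p : ℕ}

/-- The interior knots `1/m, …, (m - 1)/m` of the uniform partition of `(0, 1)` into `m = n + 1`
intervals. -/
def uniformKnot (n : ℕ) (j : Fin n) : ℝ := (j + 1) / (n + 1)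

theorem uniformKnot_strictMono (n : ℕ) : StrictMono (uniformKnot n) := by
  intro i j hij
  unfold uniformKnot
  gcongr
  exact_mod_cast hij

theorem uniformKnot_mem_Ioo (j : Fin n) : uniformKnot n j ∈ Ioo (0 : ℝ) 1 := by
  refine ⟨by unfold uniformKnot; positivity, ?_⟩
  rw [uniformKnot, div_lt_one (by positivity)]
  exact_mod_cast Nat.succ_lt_succ j.2

theorem mem_pieceSet_iff {k : ℕ} {x : ℝ} :
    x ∈ pieceSet (n + 1) k ↔
      (k ≠ 0 → (k : ℝ) / (n + 1) ≤ x) ∧ (k ≠ n → x ≤ ((k : ℝ) + 1) / (n + 1)) := by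
  by_cases hk0 : k = 0 <;> by_cases hkn : k = n
  · subst hk0 hkn
    simpa [pieceSet] using le_total x 1 |>.imp_right zero_le_one.trans
  · subst hk0
    simp [pieceSet, hkn]
  · subst hkn
    simpa [pieceSet, hk0] using fun h _ => h
  · simp [pieceSet, hk0, hkn]

theorem mem_knotPiece_uniformKnot_iff {k : ℕ} (hk : k ≤ n) {x : ℝ} :
    x ∈ knotPiece (uniformKnot n) k ↔
      (k ≠ 0 → (k : ℝ) / (n + 1) ≤ x) ∧ (k ≠ n → x ≤ ((k : ℝ) + 1) / (n + 1)) := by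
  constructor
  · intro hx
    refine ⟨fun hk0 => ?_, fun hkn => (hx ⟨k, by lia⟩).2 le_rfl⟩
    have h_left := (hx ⟨k - 1, by lia⟩).1 (Nat.sub_one_lt hk0)
    rwa [uniformKnot, Nat.cast_pred (by lia), sub_add_cancel] at h_left
  · rintro ⟨h_left, h_right⟩ j
    refine ⟨fun hj => le_trans ?_ (h_left (by lia)), fun hj => (h_right (by lia)).trans ?_⟩
    · unfold uniformKnot
      gcongr
      exact_mod_cast hj
    · unfold uniformKnot
      gcongr

theorem pieceSet_eq_knotPiece {k : ℕ} (hk : k ≤ n) :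
    pieceSet (n + 1) k = knotPiece (uniformKnot n) k :=
  Set.ext fun _ => mem_pieceSet_iff.trans (mem_knotPiece_uniformKnot_iff hk).symm

theorem isSpline_iff_mem_range_truncPowSum (hp : p ≠ 0) {u : ℝ → ℝ} :
    IsSpline (n + 1) p u ↔ u ∈ LinearMap.range (truncPowSum (uniformKnot n) p) := by
  constructor
  · rintro ⟨hu, hpiece⟩
    refine exists_truncPowSum_eq hp (uniformKnot_strictMono n)
      (fun j => hu.contDiffAt (isOpen_Ioo.mem_nhds (uniformKnot_mem_Ioo j))) fun k hk => ?_
    rw [← pieceSet_eq_knotPiece hk]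
    exact hpiece k (Nat.lt_succ_of_le hk)
  · rintro ⟨e, rfl⟩
    refine ⟨(contDiff_truncPowSum hp e).contDiffOn,
      fun k hk => ⟨piecePoly (uniformKnot n) p k e, natDegree_piecePoly_le k e, ?_⟩⟩
    rw [pieceSet_eq_knotPiece (Nat.le_of_lt_succ hk)]
    exact eqOn_truncPowSum_piecePoly hp k e

theorem isSpline0_iff_mem_map_ker (hp : p ≠ 0) {u : ℝ → ℝ} :
    IsSpline0 (n + 1) p u ↔
      u ∈ (LinearMap.ker (endpointOddDerivs (uniformKnot n) p 0 1)).map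
        (truncPowSum (uniformKnot n) p) := by
  have h_ker := endpointOddDerivs_eq_zero_iff hp (fun j : Fin n => (uniformKnot_mem_Ioo j).1)
    (fun j => (uniformKnot_mem_Ioo j).2)
  rw [IsSpline0, isSpline_iff_mem_range_truncPowSum hp, Submodule.mem_map]
  constructor
  · rintro ⟨⟨e, rfl⟩, he⟩
    exact ⟨e, (h_ker e).2 he, rfl⟩
  · rintro ⟨e, he, rfl⟩
    exact ⟨⟨e, rfl⟩, (h_ker e).1 he⟩

end UniformPartition

theorem finrank_span_isSpline {m p : ℕ} (hm : m ≠ 0) (hp : p ≠ 0) :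
    Module.finrank ℝ (Submodule.span ℝ {u : ℝ → ℝ | IsSpline m p u}) = m + p := by
  obtain ⟨n, rfl⟩ := Nat.exists_eq_succ_of_ne_zero hm
  have h_set : {u | IsSpline (n + 1) p u} =
      (LinearMap.range (truncPowSum (uniformKnot n) p) : Set (ℝ → ℝ)) :=
    Set.ext fun _ => isSpline_iff_mem_range_truncPowSum hp
  rw [h_set, Submodule.span_eq, finrank_range_truncPowSum hp (uniformKnot_strictMono n)]
  lia

theorem finrank_span_isSpline0_add {m p : ℕ} (hm : m ≠ 0) (hp : p ≠ 0) :
    Module.finrank ℝ (Submodule.span ℝ {u : ℝ → ℝ | IsSpline0 m p u}) + 2 * (p / 2) = m + p := by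
  obtain ⟨n, rfl⟩ := Nat.exists_eq_succ_of_ne_zero hm
  have h_set : {u | IsSpline0 (n + 1) p u} =
      ((LinearMap.ker (endpointOddDerivs (uniformKnot n) p 0 1)).map
        (truncPowSum (uniformKnot n) p) : Set (ℝ → ℝ)) :=
    Set.ext fun _ => isSpline0_iff_mem_map_ker hp
  rw [h_set, Submodule.span_eq, ← (Submodule.equivMapOfInjective _
    (truncPowSum_injective hp (uniformKnot_strictMono n)) _).finrank_eq,
    finrank_ker_endpointOddDerivs_add zero_ne_one]
  lia

theorem spline_space_dimensions_general {m p : ℕ} (hm : m ≠ 0) (hp : p ≠ 0) :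
    Module.finrank ℝ (Submodule.span ℝ {u : ℝ → ℝ | IsSpline m p u}) = m + p ∧
      Module.finrank ℝ (Submodule.span ℝ {u : ℝ → ℝ | IsSpline0 m p u}) = m + p - 2 * (p / 2) :=
  ⟨finrank_span_isSpline hm hp, Nat.eq_sub_of_add_eq (finrank_span_isSpline0_add hm hp)⟩

/-- `dim S = m + p`, `dim S₀ ≥ dim S − p`, and if `p + 1 ≤ m`
then `dim S₀ = m + p − 2⌊p/2⌋` exactly. -/
theorem spline_space_dimensions :
    ∀ m p : ℕ, 1 ≤ m → 1 ≤ p →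
      Module.finrank ℝ (Submodule.span ℝ {u : ℝ → ℝ | IsSpline m p u}) = m + p ∧
      Module.finrank ℝ (Submodule.span ℝ {u : ℝ → ℝ | IsSpline m p u}) - p ≤
        Module.finrank ℝ (Submodule.span ℝ {u : ℝ → ℝ | IsSpline0 m p u}) ∧
      (p + 1 ≤ m →
        Module.finrank ℝ (Submodule.span ℝ {u : ℝ → ℝ | IsSpline0 m p u}) =
          m + p - 2 * (p / 2)) := by
  intro m p hm hp
  have h_dims := spline_space_dimensions_general (m := m) (p := p) (by lia) (by lia)
  lia

end SplineMG
end
end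

section
/- In the operator (spectral) sense on S, one has M_0 + M_1 = M, and there exists a constant c independent of h and p such that K_0 + K_1 ≤ c·K, where all summands are positive semidefinite; consequently K_β ≤ c·K and M_β ≤ M for β ∈ {0,1}. -/
noncomputable section

open MeasureTheory Set

namespace SplineMG

/-!
Scaling each cell to `[0, 1]` turns the claim into estimates whose constants do not see the mesh.
Let `Σ_p^b` be the smooth splines of degree `p` whose derivatives of even order vanish at both ends
if `b`, and those of odd order if `¬b`, so that `S₀ = Σ_p^false`. Differentiation maps `Σ_{p+1}^b`
into `Σ_p^{¬b}`, and integrating by parts a product of functions with complementary boundary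
conditions leaves no boundary term. Induction on the degree therefore gives, uniformly in `p`,

* an inverse inequality `‖F'‖ ≤ 4 ‖F‖` for `F ∈ Σ_p^b`;
* for continuous piecewise polynomial `f` (vanishing at both ends if `b`), some `w ∈ Σ_p^b` with
  `‖f - w‖ ≤ 2 ‖f'‖` and `‖w'‖ ≤ ‖f'‖`.

If `Q` is the `L²` projection onto `Σ_p^b`, then `‖(Q f)'‖ ≤ ‖(Q (f - w))'‖ + ‖w'‖ ≤ 9 ‖f'‖`.
The bound on the stiffness forms follows, and the one on the mass forms is Pythagoras.
-/

open Polynomial Topology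
open scoped RealInnerProductSpace

lemma le_of_sq_le_mul {x a : ℝ} (ha : 0 ≤ a) (h : x ^ 2 ≤ a * x) : x ≤ a := by
  by_contra! hax
  nlinarith

lemma norm_sub_starProjection_le {E : Type*} [NormedAddCommGroup E] [InnerProductSpace ℝ E]
    (K : Submodule ℝ E) [K.HasOrthogonalProjection] (x : E) : ‖x - K.starProjection x‖ ≤ ‖x‖ := by
  rw [← Submodule.starProjection_orthogonal_val]
  exact Submodule.norm_starProjection_apply_le _ _

/-! ### Estimates on the unit interval -/

lemma integral_eval_derivative (q : ℝ[X]) (a b : ℝ) :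
    ∫ t in a..b, q.derivative.eval t = q.eval b - q.eval a :=
  intervalIntegral.integral_eq_sub_of_hasDerivAt (fun t _ => q.hasDerivAt t)
    (q.derivative.continuous.intervalIntegrable _ _)

lemma exists_derivative_eq_and_eval_zero_eq_zero (q : ℝ[X]) :
    ∃ r : ℝ[X], r.derivative = q ∧ r.eval 0 = 0 := by
  induction q using Polynomial.induction_on' with
  | add q₁ q₂ h₁ h₂ =>
    obtain ⟨r₁, hr₁, hr₁0⟩ := h₁
    obtain ⟨r₂, hr₂, hr₂0⟩ := h₂
    exact ⟨r₁ + r₂, by rw [derivative_add, hr₁, hr₂], by rw [eval_add, hr₁0, hr₂0, add_zero]⟩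
  | monomial k a =>
    have hk : (k + 1 : ℝ) ≠ 0 := by positivity
    exact ⟨monomial (k + 1) (a / (k + 1)), by simp [hk], by simp⟩

lemma integral_eval_mul_self_nonneg (q : ℝ[X]) : 0 ≤ ∫ t in (0 : ℝ)..1, (q * q).eval t :=
  intervalIntegral.integral_nonneg zero_le_one fun t _ => by
    simpa only [eval_mul] using mul_self_nonneg (q.eval t)

lemma eq_zero_of_integral_mul_self_eq_zero {q : ℝ[X]}
    (h : ∫ t in (0 : ℝ)..1, (q * q).eval t = 0) : q = 0 := by
  have hae : (q * q).eval =ᵐ[volume.restrict (Ioc 0 1)] 0 :=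
    (intervalIntegral.integral_eq_zero_iff_of_le_of_nonneg_ae zero_le_one
      (.of_forall fun t => by simp [mul_self_nonneg])
      ((q * q).continuous.intervalIntegrable _ _)).1 h
  have hzero : EqOn (q * q).eval 0 (Ioc 0 1) :=
    Measure.eqOn_Ioc_of_ae_eq volume hae (q * q).continuous.continuousOn continuousOn_const
  refine eq_zero_of_infinite_isRoot q ((Ioc_infinite zero_lt_one).mono fun t ht => ?_)
  simpa using hzero ht

/-- Integrate `f ^ 2` by parts against the primitive `t - 1` of `1`: both boundary terms vanish. -/
lemma integral_sq_le_four_mul_integral_deriv_sq {f f' : ℝ → ℝ}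
    (hf : ∀ t ∈ Icc (0 : ℝ) 1, HasDerivAt f (f' t) t) (hf' : ContinuousOn f' (Icc 0 1))
    (h0 : f 0 = 0) :
    ∫ t in (0 : ℝ)..1, f t ^ 2 ≤ 4 * ∫ t in (0 : ℝ)..1, f' t ^ 2 := by
  rw [← uIcc_of_le zero_le_one] at hf hf'
  have hfc : ContinuousOn f (uIcc 0 1) := fun t ht => (hf t ht).continuousAt.continuousWithinAt
  have hsq : ∫ t in (0 : ℝ)..1, f t ^ 2 = ∫ t in (0 : ℝ)..1, 2 * (1 - t) * f t * f' t := by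
    have hparts := intervalIntegral.integral_mul_deriv_eq_deriv_mul (u := fun t => f t ^ 2)
      (fun t ht => (hf t ht).fun_pow 2) (fun t _ => (hasDerivAt_id' t).sub_const 1)
      (ContinuousOn.intervalIntegrable (by fun_prop)) intervalIntegrable_const
    rw [show ∫ t in (0 : ℝ)..1, f t ^ 2 = ∫ t in (0 : ℝ)..1, f t ^ 2 * 1 by simp, hparts, h0,
      sub_self, mul_zero, zero_pow two_ne_zero, zero_mul, sub_self, zero_sub,
      ← intervalIntegral.integral_neg]
    congr with t
    ring
  have young : ∫ t in (0 : ℝ)..1, 2 * (1 - t) * f t * f' t ≤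
      ∫ t in (0 : ℝ)..1, (1 / 2 * f t ^ 2 + 2 * f' t ^ 2) := by
    refine intervalIntegral.integral_mono_on zero_le_one
      (ContinuousOn.intervalIntegrable (by fun_prop))
      (ContinuousOn.intervalIntegrable (by fun_prop)) fun t ht => ?_
    have hweight : (1 - t) ^ 2 ≤ 1 := by nlinarith [ht.1, ht.2]
    nlinarith [sq_nonneg (f t - 2 * (1 - t) * f' t),
      mul_nonneg (sub_nonneg.2 hweight) (sq_nonneg (f' t))]
  rw [intervalIntegral.integral_add (ContinuousOn.intervalIntegrable (by fun_prop))
    (ContinuousOn.intervalIntegrable (by fun_prop)), intervalIntegral.integral_const_mul,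
    intervalIntegral.integral_const_mul] at young
  linarith

lemma integral_derivative_sq_le_of_natDegree_le_one {q : ℝ[X]} (hq : q.natDegree ≤ 1) :
    ∫ t in (0 : ℝ)..1, q.derivative.eval t ^ 2 ≤ 12 * ∫ t in (0 : ℝ)..1, q.eval t ^ 2 := by
  obtain ⟨a, b, rfl⟩ := exists_eq_X_add_C_of_natDegree_le_one hq
  have hint : ∫ t in (0 : ℝ)..1, (a * t + b) ^ 2 = a ^ 2 / 3 + a * b + b ^ 2 := by
    have hprim : ∀ t : ℝ, HasDerivAt (fun t => a ^ 2 / 3 * t ^ 3 + a * b * t ^ 2 + b ^ 2 * t)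
        ((a * t + b) ^ 2) t := fun t => by
      refine ((((hasDerivAt_pow 3 t).const_mul (a ^ 2 / 3)).fun_add
        ((hasDerivAt_pow 2 t).const_mul (a * b))).fun_add
        ((hasDerivAt_id' t).const_mul (b ^ 2))).congr_deriv ?_
      push_cast
      ring
    rw [intervalIntegral.integral_eq_sub_of_hasDerivAt (fun t _ => hprim t)
      (Continuous.intervalIntegrable (by fun_prop) _ _)]
    ring
  simp only [derivative_add, derivative_mul, derivative_C, zero_mul, derivative_X, mul_one,
    zero_add, add_zero, eval_C, intervalIntegral.integral_const, sub_zero, smul_eq_mul, one_mul,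
    eval_add, eval_mul, eval_X, hint]
  nlinarith [sq_nonneg (a / 2 + b)]

/-! ### Piecewise polynomials in local coordinates -/

/-- A polynomial on each of the `n + 1` cells of a uniform partition, cell `j` being parametrized by
the local coordinate `t ∈ [0, 1]`. Derivatives and `L²` products are taken in `t`, which makes every
estimate below independent of the mesh size. -/
def PiecewisePoly (n : ℕ) : Type := Fin (n + 1) → ℝ[X]

namespace PiecewisePoly

variable {n : ℕ}

instance : AddCommGroup (PiecewisePoly n) := inferInstanceAs (AddCommGroup (Fin (n + 1) → ℝ[X]))

instance : Module ℝ (PiecewisePoly n) := inferInstanceAs (Module ℝ (Fin (n + 1) → ℝ[X]))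

instance : One (PiecewisePoly n) := inferInstanceAs (One (Fin (n + 1) → ℝ[X]))

@[simp] lemma zero_apply (j : Fin (n + 1)) : (0 : PiecewisePoly n) j = 0 := rfl

@[simp] lemma one_apply (j : Fin (n + 1)) : (1 : PiecewisePoly n) j = 1 := rfl

@[simp] lemma add_apply (F G : PiecewisePoly n) (j : Fin (n + 1)) : (F + G) j = F j + G j := rfl

@[simp] lemma sub_apply (F G : PiecewisePoly n) (j : Fin (n + 1)) : (F - G) j = F j - G j := rfl

@[simp] lemma smul_apply (c : ℝ) (F : PiecewisePoly n) (j : Fin (n + 1)) : (c • F) j = c • F j :=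
  rfl

lemma intervalIntegrable_eval (q : ℝ[X]) (a b : ℝ) : IntervalIntegrable q.eval volume a b :=
  q.continuous.intervalIntegrable a b

/-- The `L²` inner product, summed over the cells in their local coordinates. -/
abbrev l2Core (n : ℕ) : InnerProductSpace.Core ℝ (PiecewisePoly n) where
  inner F G := ∑ j, ∫ t in (0 : ℝ)..1, (F j * G j).eval t
  conj_inner_symm F G := by simp only [mul_comm, conj_trivial]
  re_inner_nonneg F := le_of_le_of_eq
    (Finset.sum_nonneg fun j _ => integral_eval_mul_self_nonneg (F j)) RCLike.re_to_real.symm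
  add_left F G H := by
    simp only [add_apply, add_mul, eval_add, ← Finset.sum_add_distrib,
      intervalIntegral.integral_add (intervalIntegrable_eval _ _ _) (intervalIntegrable_eval _ _ _)]
  smul_left F G c := by
    simp only [smul_apply, smul_mul_assoc, eval_smul, smul_eq_mul,
      intervalIntegral.integral_const_mul, Finset.mul_sum, conj_trivial]
  definite F h := funext fun j => eq_zero_of_integral_mul_self_eq_zero <|
    (Finset.sum_eq_zero_iff_of_nonneg fun i _ => integral_eval_mul_self_nonneg (F i)).1 h j
      (Finset.mem_univ j)

instance : NormedAddCommGroup (PiecewisePoly n) := (l2Core n).toNormedAddCommGroup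

instance : InnerProductSpace ℝ (PiecewisePoly n) := .ofCore (l2Core n).toCore

lemma inner_def (F G : PiecewisePoly n) :
    ⟪F, G⟫ = ∑ j, ∫ t in (0 : ℝ)..1, (F j * G j).eval t := rfl

lemma norm_sq_eq_sum (F : PiecewisePoly n) :
    ‖F‖ ^ 2 = ∑ j, ∫ t in (0 : ℝ)..1, (F j).eval t ^ 2 := by
  rw [← real_inner_self_eq_norm_sq, inner_def]
  simp only [eval_mul, sq]

/-- The derivative with respect to the local coordinate, cell by cell. -/
def localDeriv : Module.End ℝ (PiecewisePoly n) where
  toFun F j := derivative (F j)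
  map_add' _ _ := funext fun _ => derivative_add
  map_smul' c F := funext fun j => derivative_smul c (F j)

@[simp] lemma localDeriv_apply (F : PiecewisePoly n) (j : Fin (n + 1)) :
    localDeriv F j = derivative (F j) := rfl

@[simp] lemma localDeriv_one : localDeriv (1 : PiecewisePoly n) = 0 :=
  funext fun _ => derivative_one

/-- The continuous piecewise polynomials; for `b = true` they also vanish at both ends of the
partition. The Boolean allows one induction to treat both boundary conditions, which
differentiation interchanges. -/
def conforming (n : ℕ) (b : Bool) : Submodule ℝ (PiecewisePoly n) where
  carrier := {F | (∀ i : Fin n, (F i.castSucc).eval 1 = (F i.succ).eval 0) ∧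
    (b = true → (F 0).eval 0 = 0 ∧ (F (Fin.last n)).eval 1 = 0)}
  zero_mem' := by simp
  add_mem' hF hG := ⟨fun i => by simp [hF.1, hG.1], fun hb => by simp [hF.2 hb, hG.2 hb]⟩
  smul_mem' c F hF := ⟨fun i => by simp [hF.1], fun hb => by simp [hF.2 hb]⟩

lemma mem_conforming {b : Bool} {F : PiecewisePoly n} : F ∈ conforming n b ↔
    (∀ i : Fin n, (F i.castSucc).eval 1 = (F i.succ).eval 0) ∧
      (b = true → (F 0).eval 0 = 0 ∧ (F (Fin.last n)).eval 1 = 0) := Iff.rfl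

lemma mem_conforming_false_of_mem {b : Bool} {F : PiecewisePoly n} (hF : F ∈ conforming n b) :
    F ∈ conforming n false := ⟨hF.1, by simp⟩

lemma one_mem_conforming_false : (1 : PiecewisePoly n) ∈ conforming n false := by
  simp [mem_conforming]

lemma sum_eval_one_sub_eval_zero {F : PiecewisePoly n} (hF : F ∈ conforming n false) :
    ∑ j, ((F j).eval 1 - (F j).eval 0) = (F (Fin.last n)).eval 1 - (F 0).eval 0 := by
  rw [Finset.sum_sub_distrib, Fin.sum_univ_castSucc, Fin.sum_univ_succ (fun j => (F j).eval 0),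
    Finset.sum_congr rfl fun i _ => hF.1 i]
  ring

lemma inner_localDeriv_add_inner_localDeriv {F G : PiecewisePoly n} (hF : F ∈ conforming n false)
    (hG : G ∈ conforming n false) :
    ⟪localDeriv F, G⟫ + ⟪F, localDeriv G⟫ =
      (F (Fin.last n)).eval 1 * (G (Fin.last n)).eval 1 - (F 0).eval 0 * (G 0).eval 0 := by
  have hFG : (fun j => F j * G j : PiecewisePoly n) ∈ conforming n false :=
    ⟨fun i => by simp [hF.1, hG.1], by simp⟩
  simp only [← eval_mul]
  rw [← sum_eval_one_sub_eval_zero hFG, inner_def, inner_def, ← Finset.sum_add_distrib]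
  refine Finset.sum_congr rfl fun j _ => ?_
  rw [← integral_eval_derivative, derivative_mul, ← intervalIntegral.integral_add
    (intervalIntegrable_eval _ _ _) (intervalIntegrable_eval _ _ _)]
  simp only [localDeriv_apply, eval_add]

lemma inner_localDeriv_one {G : PiecewisePoly n} (hG : G ∈ conforming n false) :
    ⟪localDeriv G, 1⟫ = (G (Fin.last n)).eval 1 - (G 0).eval 0 := by
  simpa using inner_localDeriv_add_inner_localDeriv hG one_mem_conforming_false

lemma inner_localDeriv_eq_neg {b : Bool} {F G : PiecewisePoly n} (hF : F ∈ conforming n b)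
    (hG : G ∈ conforming n (!b)) : ⟪localDeriv F, G⟫ = -⟪F, localDeriv G⟫ := by
  refine eq_neg_of_add_eq_zero_left ((inner_localDeriv_add_inner_localDeriv
    (mem_conforming_false_of_mem hF) (mem_conforming_false_of_mem hG)).trans ?_)
  cases b
  · simp [hG.2 rfl]
  · simp [hF.2 rfl]

/-- The splines of degree `p` and maximal smoothness whose derivatives of order `< p` satisfy
the boundary condition `b` at even orders and the opposite one at odd orders. For `b = false` this
is the space `S₀`. -/
def alternatingSpline (n p : ℕ) (b : Bool) : Submodule ℝ (PiecewisePoly n) where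
  carrier := {F | (∀ j, (F j).natDegree ≤ p) ∧
    ∀ k < p, (localDeriv ^ k) F ∈ conforming n (not^[k] b)}
  zero_mem' := by simp
  add_mem' hF hG := ⟨fun j => natDegree_add_le_of_degree_le (hF.1 j) (hG.1 j), fun k hk => by
    simpa only [map_add] using add_mem (hF.2 k hk) (hG.2 k hk)⟩
  smul_mem' c F hF := ⟨fun j => (natDegree_smul_le c (F j)).trans (hF.1 j), fun k hk => by
    simpa only [map_smul] using Submodule.smul_mem _ c (hF.2 k hk)⟩

lemma mem_alternatingSpline {p : ℕ} {b : Bool} {F : PiecewisePoly n} :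
    F ∈ alternatingSpline n p b ↔ (∀ j, (F j).natDegree ≤ p) ∧
      ∀ k < p, (localDeriv ^ k) F ∈ conforming n (not^[k] b) := Iff.rfl

lemma mem_alternatingSpline_succ {p : ℕ} {b : Bool} {F : PiecewisePoly n} :
    F ∈ alternatingSpline n (p + 1) b ↔
      F ∈ conforming n b ∧ localDeriv F ∈ alternatingSpline n p (!b) := by
  simp only [mem_alternatingSpline, localDeriv_apply, natDegree_derivative, Nat.sub_le_iff_le_add,
    Nat.forall_lt_succ_left, pow_zero, Module.End.one_apply, Function.iterate_zero, id_eq,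
    pow_succ, Module.End.mul_apply, Function.iterate_succ_apply]
  tauto

lemma mem_conforming_of_mem_alternatingSpline {p : ℕ} {b : Bool} {F : PiecewisePoly n}
    (hp : p ≠ 0) (hF : F ∈ alternatingSpline n p b) : F ∈ conforming n b :=
  hF.2 0 hp.bot_lt

lemma one_mem_alternatingSpline_false (p : ℕ) :
    (1 : PiecewisePoly n) ∈ alternatingSpline n p false := by
  cases p with
  | zero => simp [mem_alternatingSpline]
  | succ p => simp [mem_alternatingSpline_succ, one_mem_conforming_false]

instance (p : ℕ) (b : Bool) : FiniteDimensional ℝ (alternatingSpline n p b) := by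
  let restrict : alternatingSpline n p b →ₗ[ℝ] Fin (n + 1) → degreeLT ℝ (p + 1) :=
    LinearMap.pi fun j => LinearMap.codRestrict _
      ((LinearMap.proj j : (Fin (n + 1) → ℝ[X]) →ₗ[ℝ] ℝ[X]) ∘ₗ (alternatingSpline n p b).subtype)
      fun F => mem_degreeLT.2 (Order.lt_succ_of_le (natDegree_le_iff_degree_le.1 (F.2.1 j)))
  have : FiniteDimensional ℝ (degreeLT ℝ (p + 1)) :=
    (degreeLTEquiv ℝ (p + 1)).symm.finiteDimensional
  refine FiniteDimensional.of_injective restrict fun F G hFG => Subtype.ext (funext fun j => ?_)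
  exact congrArg Subtype.val (congrFun hFG j)

/-! ### The inverse inequality and the approximation property -/

/-- The boundary conditions of `F` and its derivative are complementary, so
`‖F'‖² = -⟪F, F''⟫` reduces the degree and the constant does not deteriorate with `p`. -/
theorem norm_localDeriv_le_four_mul_norm {p : ℕ} {b : Bool} {F : PiecewisePoly n}
    (hF : F ∈ alternatingSpline n (p + 1) b) : ‖localDeriv F‖ ≤ 4 * ‖F‖ := by
  induction p generalizing b F with
  | zero =>
    refine le_of_sq_le_sq ?_ (by positivity)
    have h : ‖localDeriv F‖ ^ 2 ≤ 12 * ‖F‖ ^ 2 := by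
      rw [norm_sq_eq_sum, norm_sq_eq_sum, Finset.mul_sum]
      exact Finset.sum_le_sum fun j _ => integral_derivative_sq_le_of_natDegree_le_one (hF.1 j)
    nlinarith [sq_nonneg ‖F‖]
  | succ p ih =>
    obtain ⟨hFb, hF'⟩ := mem_alternatingSpline_succ.1 hF
    refine le_of_sq_le_mul (by positivity) ?_
    calc ‖localDeriv F‖ ^ 2 = -⟪F, localDeriv (localDeriv F)⟫ := by
          rw [← real_inner_self_eq_norm_sq,
            inner_localDeriv_eq_neg hFb (mem_alternatingSpline_succ.1 hF').1]
      _ ≤ ‖F‖ * ‖localDeriv (localDeriv F)‖ :=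
          (neg_le_abs _).trans (abs_real_inner_le_norm _ _)
      _ ≤ ‖F‖ * (4 * ‖localDeriv F‖) := by gcongr; exact ih hF'
      _ = 4 * ‖F‖ * ‖localDeriv F‖ := by ring

lemma exists_mem_conforming_false_localDeriv_eq (F : PiecewisePoly n) :
    ∃ G ∈ conforming n false, localDeriv G = F := by
  choose r hr hr0 using fun j => exists_derivative_eq_and_eval_zero_eq_zero (F j)
  refine ⟨fun j => r j + C (Fin.partialSum (fun i => (r i.castSucc).eval 1) j),
    ⟨fun i => ?_, by simp⟩, funext fun j => (localDeriv_apply _ j).trans (by simp [hr])⟩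
  simp [hr0, Fin.partialSum_succ, add_comm]

lemma exists_mem_conforming_true_localDeriv_eq {F : PiecewisePoly n} (hF : ⟪F, 1⟫ = 0) :
    ∃ G ∈ conforming n true, localDeriv G = F := by
  obtain ⟨G, hG, rfl⟩ := exists_mem_conforming_false_localDeriv_eq F
  rw [inner_localDeriv_one hG] at hF
  refine ⟨G - (G 0).eval 0 • 1, ⟨fun i => by simp [hG.1], fun _ => ?_⟩, by simp⟩
  simp [hF]

/-- For `b = false`, adding a constant to `w` makes `f - w` mean-free, so that it has an
antiderivative vanishing at both ends. -/
lemma exists_localDeriv_eq_and_localDeriv_eq_sub {b : Bool} {f g : PiecewisePoly n}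
    (hg : b = true → ⟪g, 1⟫ = 0) :
    ∃ w ∈ conforming n b, localDeriv w = g ∧
      ∃ ψ ∈ conforming n (!b), localDeriv ψ = f - w := by
  cases b with
  | true =>
    obtain ⟨w, hw, hwg⟩ := exists_mem_conforming_true_localDeriv_eq (hg rfl)
    exact ⟨w, hw, hwg, exists_mem_conforming_false_localDeriv_eq _⟩
  | false =>
    obtain ⟨w, hw, hwg⟩ := exists_mem_conforming_false_localDeriv_eq g
    have hone : (1 : PiecewisePoly n) ≠ 0 := fun h => one_ne_zero (congrFun h 0)
    refine ⟨w + (⟪f - w, 1⟫ / ⟪(1 : PiecewisePoly n), 1⟫) • 1,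
      add_mem hw (Submodule.smul_mem _ _ one_mem_conforming_false), by simp [hwg],
      exists_mem_conforming_true_localDeriv_eq ?_⟩
    rw [← sub_sub, inner_sub_left, real_inner_smul_left,
      div_mul_cancel₀ _ (inner_self_ne_zero.2 hone), sub_self]

lemma exists_piecewise_const_approx (f : PiecewisePoly n) (b : Bool) :
    ∃ w ∈ alternatingSpline n 0 b, localDeriv w = 0 ∧ ‖f - w‖ ≤ 2 * ‖localDeriv f‖ := by
  let w : PiecewisePoly n := fun j => C ((f j).eval 0)
  have hw' : localDeriv w = 0 := funext fun j => derivative_C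
  refine ⟨w, ⟨fun j => (natDegree_C _).le, by simp⟩, hw', le_of_sq_le_sq ?_ (by positivity)⟩
  have hfw' : localDeriv f = localDeriv (f - w) := by rw [map_sub, hw', sub_zero]
  rw [mul_pow, show (2 : ℝ) ^ 2 = 4 by norm_num, hfw', norm_sq_eq_sum, norm_sq_eq_sum,
    Finset.mul_sum]
  refine Finset.sum_le_sum fun j _ => integral_sq_le_four_mul_integral_deriv_sq
    (fun t _ => ((f - w) j).hasDerivAt t) (Polynomial.continuousOn _) ?_
  rw [sub_apply, eval_sub, eval_C, sub_self]

/-- In degree `p + 1`, let `w` be an antiderivative of the projection of `f'`, with error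
`f - w = ψ'`. Approximating `ψ` by `ψ₀` in degree `p` gives `‖f - w‖² = -⟪ψ - ψ₀, (f - w)'⟫`, a
duality argument reproducing the constant `2`. -/
theorem exists_alternatingSpline_approx (p : ℕ) {b : Bool} {f : PiecewisePoly n}
    (hf : f ∈ conforming n b) :
    ∃ w ∈ alternatingSpline n p b, ‖f - w‖ ≤ 2 * ‖localDeriv f‖ ∧
      ‖localDeriv w‖ ≤ ‖localDeriv f‖ := by
  induction p generalizing b f with
  | zero =>
    obtain ⟨w, hw, hw', hfw⟩ := exists_piecewise_const_approx f b
    exact ⟨w, hw, hfw, by simp [hw']⟩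
  | succ p ih =>
    let K := alternatingSpline n p (!b)
    have hK : ∀ z ∈ K, ⟪localDeriv f - K.starProjection (localDeriv f), z⟫ = 0 :=
      fun z hz => K.starProjection_inner_eq_zero _ z hz
    have mean_zero : b = true → ⟪K.starProjection (localDeriv f), 1⟫ = 0 := by
      rintro rfl
      have h := hK 1 (one_mem_alternatingSpline_false p)
      rwa [inner_sub_left, inner_localDeriv_one (mem_conforming_false_of_mem hf),
        (hf.2 rfl).1, (hf.2 rfl).2, sub_self, zero_sub, neg_eq_zero] at h
    obtain ⟨w, hw, hwf, ψ, hψ, hψe⟩ := exists_localDeriv_eq_and_localDeriv_eq_sub (f := f) mean_zero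
    obtain ⟨ψ₀, hψ₀, hψψ₀, -⟩ := ih hψ
    refine ⟨w, mem_alternatingSpline_succ.2 ⟨hw, hwf ▸ K.starProjection_apply_mem _⟩, ?_,
      hwf ▸ K.norm_starProjection_apply_le _⟩
    have he' : localDeriv (f - w) = localDeriv f - K.starProjection (localDeriv f) := by
      rw [map_sub, hwf]
    refine le_of_sq_le_mul (by positivity) ?_
    calc ‖f - w‖ ^ 2 = ⟪localDeriv ψ, f - w⟫ := by rw [hψe, real_inner_self_eq_norm_sq]
      _ = -⟪ψ, localDeriv (f - w)⟫ :=
          inner_localDeriv_eq_neg hψ ((Bool.not_not b).symm ▸ sub_mem hf hw)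
      _ = -⟪ψ - ψ₀, localDeriv (f - w)⟫ := by
          rw [inner_sub_left, he', real_inner_comm _ ψ₀, hK ψ₀ hψ₀, sub_zero]
      _ ≤ ‖ψ - ψ₀‖ * ‖localDeriv (f - w)‖ := (neg_le_abs _).trans (abs_real_inner_le_norm _ _)
      _ ≤ 2 * ‖f - w‖ * ‖localDeriv f‖ := by
          rw [hψe] at hψψ₀
          rw [he']
          gcongr
          exact norm_sub_starProjection_le K _
      _ = 2 * ‖localDeriv f‖ * ‖f - w‖ := by ring

theorem norm_localDeriv_starProjection_le {p : ℕ} (hp : p ≠ 0) {b : Bool} {F : PiecewisePoly n}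
    (hF : F ∈ conforming n b) :
    ‖localDeriv ((alternatingSpline n p b).starProjection F)‖ ≤ 9 * ‖localDeriv F‖ := by
  obtain ⟨p, rfl⟩ := Nat.exists_eq_add_one_of_ne_zero hp
  let K := alternatingSpline n (p + 1) b
  obtain ⟨w, hw, hFw, hw'⟩ := exists_alternatingSpline_approx (p + 1) hF
  have hsub : K.starProjection (F - w) = K.starProjection F - w := by
    rw [map_sub, Submodule.starProjection_eq_self_iff.2 hw]
  calc ‖localDeriv (K.starProjection F)‖
      = ‖localDeriv (K.starProjection (F - w)) + localDeriv w‖ := by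
        rw [hsub, map_sub, sub_add_cancel]
    _ ≤ ‖localDeriv (K.starProjection (F - w))‖ + ‖localDeriv w‖ := norm_add_le _ _
    _ ≤ 4 * ‖K.starProjection (F - w)‖ + ‖localDeriv F‖ := by
        gcongr
        exact norm_localDeriv_le_four_mul_norm (K.starProjection_apply_mem _)
    _ ≤ 4 * (2 * ‖localDeriv F‖) + ‖localDeriv F‖ := by
        gcongr
        exact (K.norm_starProjection_apply_le _).trans hFw
    _ = 9 * ‖localDeriv F‖ := by ring

lemma norm_sq_localDeriv_splitting_le {p : ℕ} (hp : p ≠ 0) {b : Bool} {F : PiecewisePoly n}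
    (hF : F ∈ conforming n b) :
    ‖localDeriv ((alternatingSpline n p b).starProjection F)‖ ^ 2 +
      ‖localDeriv (F - (alternatingSpline n p b).starProjection F)‖ ^ 2 ≤
        181 * ‖localDeriv F‖ ^ 2 := by
  have hproj := norm_localDeriv_starProjection_le hp hF
  have hcompl : ‖localDeriv (F - (alternatingSpline n p b).starProjection F)‖ ≤
      10 * ‖localDeriv F‖ := by
    rw [map_sub]
    linarith [norm_sub_le (localDeriv F) (localDeriv ((alternatingSpline n p b).starProjection F))]
  calc _ ≤ (9 * ‖localDeriv F‖) ^ 2 + (10 * ‖localDeriv F‖) ^ 2 := by gcongr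
    _ = 181 * ‖localDeriv F‖ ^ 2 := by ring

end PiecewisePoly

open PiecewisePoly (localDeriv conforming alternatingSpline)

/-! ### Functions with polynomial pieces -/

section PieceSet

variable {n j : ℕ} {x : ℝ}

lemma mem_pieceSet : x ∈ pieceSet (n + 1) j ↔
    (j ≠ 0 → (j : ℝ) ≤ (n + 1) * x) ∧ (j ≠ n → (n + 1) * x ≤ j + 1) := by
  have hn : (0 : ℝ) < n + 1 := by positivity
  have hj : j = 0 → (j : ℝ) = 0 := by rintro rfl; exact Nat.cast_zero
  rw [pieceSet, Nat.add_sub_cancel, Nat.cast_add_one, add_sub_cancel_right]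
  split_ifs with h0 hjn hjn <;>
    simp only [mem_union, mem_Iic, mem_Ici, mem_Icc, mem_empty_iff_false, le_div_iff₀' hn,
      div_le_iff₀' hn] <;>
    grind

lemma isClosed_pieceSet : IsClosed (pieceSet (n + 1) j) := by
  have : pieceSet (n + 1) j =
      {x | j ≠ 0 → (j : ℝ) ≤ (n + 1) * x} ∩ {x | j ≠ n → (n + 1) * x ≤ j + 1} :=
    ext fun x => mem_pieceSet
  rw [this]
  exact (isClosed_imp isOpen_const (isClosed_le (by fun_prop) (by fun_prop))).inter
    (isClosed_imp isOpen_const (isClosed_le (by fun_prop) (by fun_prop)))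

lemma ordConnected_pieceSet : (pieceSet (n + 1) j).OrdConnected :=
  ⟨fun x hx y hy z hz => mem_pieceSet.2
    ⟨fun h0 => ((mem_pieceSet.1 hx).1 h0).trans (by gcongr; exact hz.1),
      fun hn => le_trans (by gcongr; exact hz.2) ((mem_pieceSet.1 hy).2 hn)⟩⟩

lemma exists_mem_pieceSet (n : ℕ) (x : ℝ) : ∃ j < n + 1, x ∈ pieceSet (n + 1) j := by
  refine ⟨min ⌊(n + 1) * x⌋₊ n, by omega, mem_pieceSet.2 ⟨fun h0 => ?_, fun hn => ?_⟩⟩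
  · have hpos : 0 < ⌊(n + 1) * x⌋₊ := by omega
    calc ((min ⌊(n + 1) * x⌋₊ n : ℕ) : ℝ) ≤ ⌊(n + 1) * x⌋₊ := by gcongr; exact min_le_left _ _
      _ ≤ (n + 1) * x := Nat.floor_le (Nat.pos_of_floor_pos hpos).le
  · rw [min_eq_left (by omega)]
    exact (Nat.lt_floor_add_one _).le

lemma iUnion_pieceSet (n : ℕ) : ⋃ j : Fin (n + 1), pieceSet (n + 1) j = univ :=
  eq_univ_of_forall fun x => by
    obtain ⟨j, hj, hx⟩ := exists_mem_pieceSet n x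
    exact mem_iUnion.2 ⟨⟨j, hj⟩, hx⟩

lemma Icc_subset_pieceSet :
    Icc ((j : ℝ) / (n + 1)) ((j + 1) / (n + 1)) ⊆ pieceSet (n + 1) j := fun x hx => by
  have hn : (0 : ℝ) < n + 1 := by positivity
  exact mem_pieceSet.2 ⟨fun _ => (div_le_iff₀' hn).1 hx.1, fun _ => (le_div_iff₀' hn).1 hx.2⟩

lemma pieceSet_mem_nhds (hx : x ∈ Ioo ((j : ℝ) / (n + 1)) ((j + 1) / (n + 1))) :
    pieceSet (n + 1) j ∈ 𝓝 x :=
  Filter.mem_of_superset (Icc_mem_nhds hx.1 hx.2) Icc_subset_pieceSet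

lemma pieceSet_zero_mem_nhds (hx : x ≤ 0) : pieceSet (n + 1) 0 ∈ 𝓝 x := by
  have hx : (n + 1) * x < 1 := by nlinarith [n.cast_nonneg (α := ℝ)]
  filter_upwards [(by fun_prop : ContinuousAt (fun x : ℝ => (n + 1) * x) x).eventually_lt
    continuousAt_const hx] with y hy
  exact mem_pieceSet.2 ⟨fun h => (h rfl).elim, fun _ => by simpa using hy.le⟩

lemma pieceSet_last_mem_nhds (hx : 1 ≤ x) : pieceSet (n + 1) n ∈ 𝓝 x := by
  have hx : (n : ℝ) < (n + 1) * x := by nlinarith [n.cast_nonneg (α := ℝ)]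
  filter_upwards [continuousAt_const.eventually_lt
    (by fun_prop : ContinuousAt (fun x : ℝ => (n + 1) * x) x) hx] with y hy
  exact mem_pieceSet.2 ⟨fun _ => by simpa using hy.le, fun h => (h rfl).elim⟩

lemma uniqueDiffOn_pieceSet : UniqueDiffOn ℝ (pieceSet (n + 1) j) := by
  have hlt : (j : ℝ) / (n + 1) < (j + 1) / (n + 1) := by gcongr; exact lt_add_one _
  exact uniqueDiffOn_convex ordConnected_pieceSet.convex <| (nonempty_Ioo.2 hlt).mono
    (interior_Icc (a := (j : ℝ) / (n + 1)) ▸ interior_mono Icc_subset_pieceSet)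

end PieceSet

/-- Away from the closed set `s i`, being differentiable within `s i` is vacuous. -/
lemma hasDerivAt_of_forall_hasDerivWithinAt {𝕜 E ι : Type*} [NontriviallyNormedField 𝕜]
    [NormedAddCommGroup E] [NormedSpace 𝕜 E] [Finite ι] {s : ι → Set 𝕜} {u : 𝕜 → E} {u' : E} {x : 𝕜}
    (hs : ⋃ i, s i = univ) (hclosed : ∀ i, IsClosed (s i))
    (h : ∀ i, x ∈ s i → HasDerivWithinAt u u' (s i) x) : HasDerivAt u u' x := by
  have hall : ∀ i, HasDerivWithinAt u u' (s i) x := fun i => by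
    by_cases hx : x ∈ s i
    · exact h i hx
    · exact hasDerivWithinAt_iff_hasFDerivWithinAt.2
        (.of_notMem_closure ((hclosed i).closure_eq.symm ▸ hx))
  rw [← hasDerivWithinAt_univ, ← hs, hasDerivWithinAt_iff_tendsto, nhdsWithin_iUnion,
    Filter.tendsto_iSup]
  exact fun i => hasDerivWithinAt_iff_tendsto.1 (hall i)

lemma PiecewisePoly.eval_eq_eval_of_mem_pieceSet {n : ℕ} {F : PiecewisePoly n}
    (hF : F ∈ conforming n false) {j k : Fin (n + 1)} {x : ℝ}
    (hj : x ∈ pieceSet (n + 1) j) (hk : x ∈ pieceSet (n + 1) k) :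
    (F j).eval ((n + 1) * x - j) = (F k).eval ((n + 1) * x - k) := by
  wlog hjk : j ≤ k generalizing j k
  · exact (this hk hj (le_of_not_ge hjk)).symm
  obtain rfl | hlt := hjk.eq_or_lt
  · rfl
  have hle : (n + 1) * x ≤ j + 1 := (mem_pieceSet.1 hj).2 (by omega)
  have hge : (k : ℝ) ≤ (n + 1) * x := (mem_pieceSet.1 hk).1 (by omega)
  have hsucc : (k : ℕ) = j + 1 :=
    le_antisymm (by exact_mod_cast hge.trans hle) (by omega)
  obtain ⟨i, rfl⟩ : ∃ i : Fin n, i.castSucc = j := ⟨⟨j, by omega⟩, rfl⟩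
  obtain rfl : i.succ = k := Fin.ext hsucc.symm
  have hknot : (n + 1) * x = i + 1 :=
    le_antisymm (by simpa using hle) (by simpa using hge)
  simpa [hknot] using hF.1 i

/-- The function `u` is given by the polynomial `F j` on the `j`-th piece of the partition of
`[0, 1]` into `n + 1` cells, `(n + 1) * x - j` being the local coordinate of `x`. The outer pieces
are unbounded, as in `pieceSet`. -/
def HasPieces {n : ℕ} (u : ℝ → ℝ) (F : PiecewisePoly n) : Prop :=
  ∀ j : Fin (n + 1), EqOn u (fun x => (F j).eval ((n + 1) * x - j)) (pieceSet (n + 1) j)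

namespace HasPieces

variable {n : ℕ} {u u' v : ℝ → ℝ} {F G : PiecewisePoly n} {x : ℝ}

lemma sub (hu : HasPieces u F) (hv : HasPieces v G) : HasPieces (u - v) (F - G) := fun j x hx => by
  simp only [Pi.sub_apply, PiecewisePoly.sub_apply, eval_sub, hu j hx, hv j hx]

lemma apply_zero (hu : HasPieces u F) : u 0 = (F 0).eval 0 := by
  simpa using hu 0 (mem_of_mem_nhds (pieceSet_zero_mem_nhds le_rfl))

lemma apply_one (hu : HasPieces u F) : u 1 = (F (Fin.last n)).eval 1 := by
  simpa using hu (Fin.last n) (mem_of_mem_nhds (pieceSet_last_mem_nhds le_rfl))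

lemma mem_conforming_false (hu : HasPieces u F) : F ∈ conforming n false := by
  refine ⟨fun i => ?_, by simp⟩
  have hknot : ((n : ℝ) + 1) * ((i + 1) / (n + 1)) = i + 1 := by field_simp
  have hleft := hu i.castSucc (x := (i + 1) / (n + 1)) (mem_pieceSet.2 (by simp [hknot]))
  have hright := hu i.succ (x := (i + 1) / (n + 1)) (mem_pieceSet.2 (by simp [hknot]))
  simpa [hknot] using hleft.symm.trans hright

lemma mem_conforming_true (hu : HasPieces u F) (h0 : u 0 = 0) (h1 : u 1 = 0) :
    F ∈ conforming n true :=
  ⟨hu.mem_conforming_false.1, fun _ => ⟨hu.apply_zero ▸ h0, hu.apply_one ▸ h1⟩⟩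

protected lemma continuous (hu : HasPieces u F) : Continuous u :=
  (locallyFinite_of_finite _).continuous (iUnion_pieceSet n) (fun _ => isClosed_pieceSet) fun j =>
    ContinuousOn.congr (by fun_prop) (hu j)

lemma hasDerivWithinAt (hu : HasPieces u F) {j : Fin (n + 1)} (hx : x ∈ pieceSet (n + 1) j) :
    HasDerivWithinAt u (((n + 1 : ℝ) • F.localDeriv) j |>.eval ((n + 1) * x - j))
      (pieceSet (n + 1) j) x := by
  have hlin : HasDerivAt (fun x : ℝ => (n + 1) * x - j) ((n + 1) * 1) x :=
    ((hasDerivAt_id' x).const_mul _).sub_const _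
  have hcomp := ((F j).hasDerivAt _).comp x hlin
  refine (hcomp.congr_deriv ?_).hasDerivWithinAt.congr_of_mem (hu j) hx
  simp [mul_comm]

lemma hasDerivAt (hu : HasPieces u F) (hu' : HasPieces u' ((n + 1 : ℝ) • F.localDeriv)) (x : ℝ) :
    HasDerivAt u (u' x) x :=
  hasDerivAt_of_forall_hasDerivWithinAt (iUnion_pieceSet n) (fun _ => isClosed_pieceSet)
    fun j hx => hu' j hx ▸ hu.hasDerivWithinAt hx

protected lemma deriv (hu : HasPieces u F) (hdiff : Differentiable ℝ u) :
    HasPieces (deriv u) ((n + 1 : ℝ) • F.localDeriv) := fun _ x hx =>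
  (uniqueDiffOn_pieceSet x hx).eq_deriv _ (hdiff x).hasDerivAt.hasDerivWithinAt
    (hu.hasDerivWithinAt hx)

lemma differentiable_of_differentiableOn_Ioo (hu : HasPieces u F)
    (hdiff : DifferentiableOn ℝ u (Ioo 0 1)) : Differentiable ℝ u := fun x => by
  rcases le_or_gt x 0 with hx0 | hx0
  · have hnhds := pieceSet_zero_mem_nhds (n := n) hx0
    exact ((hu.hasDerivWithinAt (j := 0) (mem_of_mem_nhds hnhds)).hasDerivAt
      hnhds).differentiableAt
  rcases le_or_gt 1 x with hx1 | hx1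
  · have hnhds := pieceSet_last_mem_nhds (n := n) hx1
    exact ((hu.hasDerivWithinAt (j := Fin.last n) (mem_of_mem_nhds hnhds)).hasDerivAt
      hnhds).differentiableAt
  exact hdiff.differentiableAt (Ioo_mem_nhds hx0 hx1)

protected lemma iteratedDeriv {k : ℕ} (hu : HasPieces u F)
    (hsmooth : ContDiffOn ℝ k u (Ioo 0 1)) :
    HasPieces (iteratedDeriv k u) ((n + 1 : ℝ) ^ k • (localDeriv ^ k) F) := by
  induction k generalizing u F with
  | zero => simpa using hu
  | succ k ih =>
    rw [Nat.cast_succ, contDiffOn_succ_iff_deriv_of_isOpen isOpen_Ioo] at hsmooth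
    have hu' := ih (hu.deriv (hu.differentiable_of_differentiableOn_Ioo hsmooth.1)) hsmooth.2.2
    rwa [← iteratedDeriv_succ', map_smul, smul_smul, ← pow_succ, ← Module.End.mul_apply,
      ← pow_succ] at hu'

lemma exists_of_mem_conforming_false (hF : F ∈ conforming n false) :
    ∃ u, HasPieces u F :=
  ⟨liftCover (fun j : Fin (n + 1) => pieceSet (n + 1) j)
    (fun j x => (F j).eval ((n + 1) * (x : ℝ) - j))
    (fun _ _ _ hj hk => PiecewisePoly.eval_eq_eval_of_mem_pieceSet hF hj hk) (iUnion_pieceSet n),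
    fun j _ hx => liftCover_of_mem (i := j) hx⟩

protected lemma contDiff {k : ℕ} (hu : HasPieces u F)
    (hF : ∀ i ≤ k, (localDeriv ^ i) F ∈ conforming n false) :
    ContDiff ℝ k u := by
  induction k generalizing u F with
  | zero => exact contDiff_zero.2 hu.continuous
  | succ k ih =>
    have hsmul : ∀ i ≤ k, (localDeriv ^ i) ((n + 1 : ℝ) • F.localDeriv) ∈
        conforming n false := fun i hi => by
      rw [map_smul, ← Module.End.mul_apply, ← pow_succ]
      exact Submodule.smul_mem _ _ (hF (i + 1) (by omega))
    obtain ⟨u', hu'⟩ := exists_of_mem_conforming_false (hsmul 0 (by omega))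
    have hderiv : deriv u = u' := funext fun x => (hu.hasDerivAt hu' x).deriv
    rw [Nat.cast_succ, contDiff_succ_iff_deriv, hderiv]
    exact ⟨fun x => (hu.hasDerivAt hu' x).differentiableAt, by simp, ih hu' hsmul⟩

end HasPieces

/-! ### Splines and their energies in local coordinates -/

lemma natDegree_comp_le_of_natDegree_le_one {R : Type*} [Semiring R] {q r : R[X]}
    (hr : r.natDegree ≤ 1) : (q.comp r).natDegree ≤ q.natDegree :=
  natDegree_comp_le.trans ((Nat.mul_le_mul_left _ hr).trans_eq (mul_one _))

section Spline

variable {n p : ℕ} {u v : ℝ → ℝ} {F G : PiecewisePoly n}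

lemma exists_hasPieces {q : Fin (n + 1) → ℝ[X]}
    (hq : ∀ j : Fin (n + 1), ∀ x ∈ pieceSet (n + 1) j, u x = (q j).eval x) :
    ∃ F : PiecewisePoly n, HasPieces u F ∧ ∀ j, (F j).natDegree ≤ (q j).natDegree := by
  refine ⟨fun j => (q j).comp (C (n + 1 : ℝ)⁻¹ * (X + C (j : ℝ))), fun j x hx => ?_, fun j => ?_⟩
  · have hx' : (n + 1 : ℝ)⁻¹ * ((n + 1) * x) = x := inv_mul_cancel_left₀ (by positivity) x
    simp [hq j x hx, hx']
  · exact natDegree_comp_le_of_natDegree_le_one (by compute_degree)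

lemma HasPieces.exists_eval_eq (hu : HasPieces u F) (j : Fin (n + 1)) :
    ∃ q : ℝ[X], q.natDegree ≤ (F j).natDegree ∧ ∀ x ∈ pieceSet (n + 1) j, u x = q.eval x := by
  exact ⟨(F j).comp (C (n + 1 : ℝ) * X - C (j : ℝ)),
    natDegree_comp_le_of_natDegree_le_one (by compute_degree), fun x hx => by simp [hu j hx]⟩

lemma not_iterate_false_eq_true_iff {k : ℕ} : not^[k] false = true ↔ Odd k := by
  induction k with
  | zero => simp
  | succ k ih => simp [Function.iterate_succ_apply', Nat.odd_add_one, ← ih]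

lemma HasPieces.mem_alternatingSpline_false (hu : HasPieces u F) (hdeg : ∀ j, (F j).natDegree ≤ p)
    (hspline : IsSpline0 (n + 1) p u) : F ∈ alternatingSpline n p false := by
  refine ⟨hdeg, fun k hk => ?_⟩
  have huk := hu.iteratedDeriv (k := k)
    (hspline.1.1.of_le (by exact_mod_cast Nat.le_sub_one_of_lt hk))
  rw [← Submodule.smul_mem_iff _ (by positivity : (n + 1 : ℝ) ^ k ≠ 0)]
  refine ⟨huk.mem_conforming_false.1, fun hodd => ?_⟩
  obtain ⟨l, rfl⟩ := not_iterate_false_eq_true_iff.1 hodd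
  obtain ⟨h0, h1⟩ := hspline.2 l hk
  exact (huk.mem_conforming_true h0 h1).2 rfl

lemma HasPieces.isSpline0 (hu : HasPieces u F) (hp : p ≠ 0) (hF : F ∈ alternatingSpline n p false) :
    IsSpline0 (n + 1) p u := by
  have hsmooth : ContDiff ℝ (p - 1 : ℕ) u := hu.contDiff fun i hi =>
    PiecewisePoly.mem_conforming_false_of_mem (hF.2 i (by omega))
  refine ⟨⟨hsmooth.contDiffOn, fun j hj => ?_⟩, fun l hl => ?_⟩
  · obtain ⟨q, hq, huq⟩ := hu.exists_eval_eq ⟨j, hj⟩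
    exact ⟨q, hq.trans (hF.1 _), huq⟩
  · have huk := hu.iteratedDeriv (k := 2 * l + 1)
      (hsmooth.contDiffOn.of_le (by exact_mod_cast Nat.le_sub_one_of_lt hl))
    obtain ⟨h0, h1⟩ := (hF.2 _ hl).2 (not_iterate_false_eq_true_iff.2 ⟨l, rfl⟩)
    simp [huk.apply_zero, huk.apply_one, h0, h1]

lemma setIntegral_Ioo_eq_sum_cells {g : ℝ → ℝ} {φ : Fin (n + 1) → ℝ → ℝ}
    (hφ : ∀ j, Continuous (φ j)) (hg : ∀ j : Fin (n + 1),
      ∀ x ∈ Ioo ((j : ℝ) / (n + 1)) ((j + 1) / (n + 1)), g x = φ j ((n + 1) * x - j)) :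
    ∫ x in Ioo (0 : ℝ) 1, g x = (n + 1 : ℝ)⁻¹ * ∑ j, ∫ t in (0 : ℝ)..1, φ j t := by
  have hn : (n + 1 : ℝ) ≠ 0 := by positivity
  have hle (j : ℕ) : (j : ℝ) / (n + 1) ≤ (j + 1) / (n + 1) := by
    gcongr
    exact le_add_of_nonneg_right zero_le_one
  have hsplit : ∫ x in Ioo (0 : ℝ) 1, g x =
      ∑ j : Fin (n + 1), ∫ x in (j / (n + 1) : ℝ)..(j + 1) / (n + 1), g x := by
    have hadjacent := intervalIntegral.sum_integral_adjacent_intervals (f := g) (μ := volume)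
      (a := fun j : ℕ => (j : ℝ) / (n + 1)) (n := n + 1) fun j hj => by
        have hcont : Continuous fun x : ℝ => φ ⟨j, hj⟩ ((n + 1) * x - j) := by fun_prop
        refine (hcont.intervalIntegrable _ _).congr_uIoo ?_
        rw [Nat.cast_succ, uIoo_of_le (hle j)]
        exact fun x hx => (hg ⟨j, hj⟩ x hx).symm
    rw [Finset.sum_range] at hadjacent
    simpa [div_self hn, intervalIntegral.integral_of_le, integral_Ioc_eq_integral_Ioo]
      using hadjacent.symm
  rw [hsplit, Finset.mul_sum]
  refine Finset.sum_congr rfl fun j _ => ?_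
  rw [intervalIntegral.integral_congr_Ioo_of_le (hle j) (hg j),
    intervalIntegral.integral_comp_mul_sub (f := φ j) hn, smul_eq_mul, mul_div_cancel₀ _ hn,
    mul_div_cancel₀ _ hn, sub_self, add_sub_cancel_left]

lemma HasPieces.ip0_eq (hu : HasPieces u F) (hv : HasPieces v G) :
    ip0 u v = (n + 1 : ℝ)⁻¹ * ⟪F, G⟫ :=
  setIntegral_Ioo_eq_sum_cells (fun j => (F j * G j).continuous) fun j x hx => by
    have hx := Icc_subset_pieceSet (Ioo_subset_Icc_self hx)
    simp only [eval_mul, hu j hx, hv j hx]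

lemma HasPieces.l2normSq_eq (hu : HasPieces u F) : l2normSq u = (n + 1 : ℝ)⁻¹ * ‖F‖ ^ 2 := by
  rw [← real_inner_self_eq_norm_sq, ← hu.ip0_eq hu]
  simp only [l2normSq, ip0, sq]

lemma HasPieces.h1semiSq_eq (hu : HasPieces u F) :
    h1semiSq u = (n + 1 : ℝ) * ‖localDeriv F‖ ^ 2 := by
  have hcells : h1semiSq u = (n + 1 : ℝ)⁻¹ * ‖(n + 1 : ℝ) • localDeriv F‖ ^ 2 := by
    rw [PiecewisePoly.norm_sq_eq_sum]
    refine setIntegral_Ioo_eq_sum_cells (fun j => by fun_prop) fun j x hx => ?_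
    rw [((hu.hasDerivWithinAt (Icc_subset_pieceSet (Ioo_subset_Icc_self hx))).hasDerivAt
      (pieceSet_mem_nhds hx)).deriv]
  rw [hcells, norm_smul, mul_pow, Real.norm_eq_abs, sq_abs]
  field_simp

lemma HasPieces.starProjection_of_isL2Proj0 (hu : HasPieces u F) (hp : p ≠ 0)
    (hv : IsL2Proj0 (n + 1) p u v) :
    HasPieces v ((alternatingSpline n p false).starProjection F) := by
  choose q hdeg hq using hv.1.1.2
  obtain ⟨G, hG, hGq⟩ := exists_hasPieces (q := fun j : Fin (n + 1) => q j j.2) fun j => hq j j.2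
  have hGmem := hG.mem_alternatingSpline_false (fun j => (hGq j).trans (hdeg j j.2)) hv.1
  have horth : ∀ W ∈ alternatingSpline n p false, ⟪F - G, W⟫ = 0 := fun W hW => by
    obtain ⟨w, hw⟩ := HasPieces.exists_of_mem_conforming_false
      (PiecewisePoly.mem_conforming_of_mem_alternatingSpline hp hW)
    have h := hv.2 w (hw.isSpline0 hp hW)
    rw [(hu.sub hG).ip0_eq hw] at h
    exact (mul_eq_zero_iff_left (by positivity)).1 h
  rwa [Submodule.eq_starProjection_of_mem_of_inner_eq_zero hGmem horth]

end Spline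

/-- Adjacent pieces share a knot, so `u` ranges over the continuous piecewise polynomials. -/
theorem mass_stiffness_splitting_bounds_general :
    ∃ c : ℝ, 0 < c ∧ ∀ m p : ℕ, 1 ≤ m → 1 ≤ p →
      ∀ u v : ℝ → ℝ, (∀ j < m, ∃ q : ℝ[X], ∀ x ∈ pieceSet m j, u x = q.eval x) →
        IsL2Proj0 m p u v →
        (l2normSq v + l2normSq (u - v) = l2normSq u) ∧
        (h1semiSq v + h1semiSq (u - v) ≤ c * h1semiSq u) ∧
        (h1semiSq v ≤ c * h1semiSq u ∧ h1semiSq (u - v) ≤ c * h1semiSq u) ∧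
        (l2normSq v ≤ l2normSq u ∧ l2normSq (u - v) ≤ l2normSq u) := by
  refine ⟨181, by norm_num, fun m p hm hp u v hpieces hv => ?_⟩
  obtain ⟨n, rfl⟩ := Nat.exists_eq_add_of_le' hm
  choose q hq using hpieces
  obtain ⟨F, hu, -⟩ := exists_hasPieces (q := fun j : Fin (n + 1) => q j j.2) fun j => hq j j.2
  have hv := hu.starProjection_of_isL2Proj0 (by omega) hv
  have hmass : l2normSq v + l2normSq (u - v) = l2normSq u := by
    rw [hv.l2normSq_eq, (hu.sub hv).l2normSq_eq, hu.l2normSq_eq, ← mul_add,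
      Submodule.norm_sq_eq_add_norm_sq_starProjection F (alternatingSpline n p false),
      Submodule.starProjection_orthogonal_val]
  have hstiff : h1semiSq v + h1semiSq (u - v) ≤ 181 * h1semiSq u := by
    rw [hv.h1semiSq_eq, (hu.sub hv).h1semiSq_eq, hu.h1semiSq_eq, ← mul_add, mul_left_comm]
    gcongr
    exact PiecewisePoly.norm_sq_localDeriv_splitting_le (by omega) hu.mem_conforming_false
  have l2normSq_nonneg (w : ℝ → ℝ) : 0 ≤ l2normSq w := integral_nonneg fun x => sq_nonneg (w x)
  have h1semiSq_nonneg (w : ℝ → ℝ) : 0 ≤ h1semiSq w :=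
    integral_nonneg fun x => sq_nonneg (deriv w x)
  refine ⟨hmass, hstiff, ⟨?_, ?_⟩, ?_, ?_⟩ <;>
    linarith [l2normSq_nonneg v, l2normSq_nonneg (u - v), h1semiSq_nonneg v,
      h1semiSq_nonneg (u - v)]

/-- in the spectral sense on `S`, `M₀ + M₁ = M` and
`K₀ + K₁ ≤ c·K` with `c` independent of `h` and `p`; consequently `K_β ≤ c·K` and
`M_β ≤ M` for `β ∈ {0,1}`.  In quadratic forms (with `v = Q₀u`, so `Q₁u = u − v`):
`‖Q₀u‖₀² + ‖Q₁u‖₀² = ‖u‖₀²`, `|Q₀u|₁² + |Q₁u|₁² ≤ c|u|₁²`, and the individual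
bounds `|Q_βu|₁² ≤ c|u|₁²`, `‖Q_βu‖₀² ≤ ‖u‖₀²`. -/
theorem mass_stiffness_splitting_bounds :
    ∃ c : ℝ, 0 < c ∧ ∀ m p : ℕ, 1 ≤ m → 1 ≤ p →
      ∀ u v : ℝ → ℝ, IsSpline m p u → IsL2Proj0 m p u v →
        (l2normSq v + l2normSq (u - v) = l2normSq u) ∧
        (h1semiSq v + h1semiSq (u - v) ≤ c * h1semiSq u) ∧
        (h1semiSq v ≤ c * h1semiSq u ∧ h1semiSq (u - v) ≤ c * h1semiSq u) ∧
        (l2normSq v ≤ l2normSq u ∧ l2normSq (u - v) ≤ l2normSq u) := by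
  obtain ⟨c, hc, h⟩ := mass_stiffness_splitting_bounds_general
  exact ⟨c, hc, fun m p hm hp u v hu => h m p hm hp u v fun j hj =>
    (hu.2 j hj).imp fun _ => And.right⟩

end SplineMG
end
end
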